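/- Let 1<p<∞. There exists a constant C_p>0 such that for every smooth, divergence-free, axially symmetric vector field u = u^r(r,z)e_r + u^θ(r,z)e_θ + u^z(r,z)e_z on ℝ³ with sufficient decay, writing w^θ = ∂_z u^r − ∂_r u^z and Ω = w^θ/r, one has ‖∇(u^r/r)‖_{L^p(ℝ³)} ≤ C_p ‖Ω‖_{L^p(ℝ³)}, where u^r/r is regarded as a function on ℝ³ and ∇ is the full spatial gradient. -/

import Mathlib

open MeasureTheory Set ENNReal

noncomputable section

abbrev E3 : Type := EuclideanSpace ℝ (Fin 3)

def pd (i : Fin 3) (f : E3 → ℝ) (x : E3) : ℝ :=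
  fderiv ℝ f x (EuclideanSpace.single i 1)

/-- Distance to the `x₃`-axis. -/
def rad (x : E3) : ℝ := Real.sqrt (x 0 ^ 2 + x 1 ^ 2)

/-- Partial derivative in the `r` variable of a function of `(r, z)`. -/
def pdr (f : ℝ → ℝ → ℝ) (r z : ℝ) : ℝ := deriv (fun r' => f r' z) r

/-- Partial derivative in the `z` variable of a function of `(r, z)`. -/
def pdz (f : ℝ → ℝ → ℝ) (r z : ℝ) : ℝ := deriv (fun z' => f r z') z

/-- A vector field is axially symmetric with cylindrical components `vr, vθ, vz`. -/
def AxisymVec (v : E3 → E3) (vr vθ vz : ℝ → ℝ → ℝ) : Prop :=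
  ∀ x : E3, rad x ≠ 0 →
    v x 0 = vr (rad x) (x 2) * (x 0 / rad x) - vθ (rad x) (x 2) * (x 1 / rad x) ∧
    v x 1 = vr (rad x) (x 2) * (x 1 / rad x) + vθ (rad x) (x 2) * (x 0 / rad x) ∧
    v x 2 = vz (rad x) (x 2)

/-- `Ω = w^θ/r` with `w^θ = ∂_z u^r − ∂_r u^z`, as a function on `ℝ³`. -/
def OmegaFun (ur uz : ℝ → ℝ → ℝ) (x : E3) : ℝ :=
  (pdz ur (rad x) (x 2) - pdr uz (rad x) (x 2)) / rad x

/-!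
Averaging `u` with its mirror image under `x₂ ↦ -x₂` removes the swirl and leaves the
divergence-free field `U = u^r e_r + u^z e_z`, whose horizontal components satisfy
`Δ U_i = ∂_z (x_i Ω)`. Since `U_i = x_i (u^r / r)` and `e_θ` annihilates the gradient of `u^r / r`,
one has `∂_k (u^r / r) = ∑_{i, j} (e_θ)_i (e_θ)_j ∂_k ∂_j U_i`. Commuting the factor `x_i` with
`Δ⁻¹` expresses `∂_k ∂_j U_i` by double Riesz transforms of `Ω`, up to a term proportional to `x_i`
that the contraction kills because `e_θ` is orthogonal to `x`. To avoid `Δ⁻¹`, the identity is used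
for the resolvent `(ε - Δ)⁻¹`, with bounds uniform in `ε > 0`, and `ε → 0` by Fatou's lemma.

The double Riesz transforms are bounded on `L^p` by the Bellman function method of Nazarov, Treil
and Volberg. The convexity of the Bellman function, composed with the heat extensions of `f` and
`g`, gives the bilinear embedding
`∫₀^∞ ∫ |∂_j e^{tΔ} f| |∂_k e^{tΔ} g| dx dt ≤ C (‖f‖_p ^ p + ‖g‖_q ^ q)`,
and the left side dominates the pairing of `∂_j ∂_k (ε - Δ)⁻¹ f` with `g`.
-/

/-! ### The Bellman function -/

section Bellman

open scoped ContDiff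

/-- The functions `f'` and `f''` are the first two derivatives of `f` on the real line. -/
structure HasTwoJet (f f' f'' : ℝ → ℝ) : Prop where
  hasDerivAt : ∀ s, HasDerivAt f (f' s) s
  hasDerivAt_deriv : ∀ s, HasDerivAt f' (f'' s) s

namespace HasTwoJet

variable {f f' f'' g g' g'' : ℝ → ℝ}

lemma add (hf : HasTwoJet f f' f'') (hg : HasTwoJet g g' g'') :
    HasTwoJet (fun s => f s + g s) (fun s => f' s + g' s) fun s => f'' s + g'' s :=
  ⟨fun s => (hf.hasDerivAt s).add (hg.hasDerivAt s),
    fun s => (hf.hasDerivAt_deriv s).add (hg.hasDerivAt_deriv s)⟩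

lemma const_mul (c : ℝ) (hf : HasTwoJet f f' f'') :
    HasTwoJet (fun s => c * f s) (fun s => c * f' s) fun s => c * f'' s :=
  ⟨fun s => (hf.hasDerivAt s).const_mul c, fun s => (hf.hasDerivAt_deriv s).const_mul c⟩

lemma mul (hf : HasTwoJet f f' f'') (hg : HasTwoJet g g' g'') :
    HasTwoJet (fun s => f s * g s) (fun s => f' s * g s + f s * g' s)
      fun s => f'' s * g s + 2 * (f' s * g' s) + f s * g'' s := by
  refine ⟨fun s => (hf.hasDerivAt s).mul (hg.hasDerivAt s), fun s => ?_⟩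
  refine (((hf.hasDerivAt_deriv s).mul (hg.hasDerivAt s)).add
    ((hf.hasDerivAt s).mul (hg.hasDerivAt_deriv s))).congr_deriv ?_
  ring

lemma rpow_const (hf : HasTwoJet f f' f'') (hpos : ∀ s, 0 < f s) (c : ℝ) :
    HasTwoJet (fun s => f s ^ c) (fun s => c * (f s ^ c / f s) * f' s)
      fun s => c * (c - 1) * (f s ^ c / f s ^ 2) * f' s ^ 2 + c * (f s ^ c / f s) * f'' s := by
  have deriv_rpow (s : ℝ) : HasDerivAt (fun s => f s ^ c) (c * (f s ^ c / f s) * f' s) s := by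
    refine ((hf.hasDerivAt s).rpow_const (Or.inl (hpos s).ne')).congr_deriv ?_
    rw [Real.rpow_sub_one (hpos s).ne']
    ring
  refine ⟨deriv_rpow, fun s => ?_⟩
  refine ((((deriv_rpow s).div (hf.hasDerivAt s) (hpos s).ne').const_mul c).mul
    (hf.hasDerivAt_deriv s)).congr_deriv ?_
  have := (hpos s).ne'
  simp only [Pi.div_apply]
  field_simp

lemma eq_second {h' h'' : ℝ → ℝ} (hf : HasTwoJet f f' f'') (hf' : HasTwoJet f h' h'') :
    f'' = h'' := by
  obtain rfl : f' = h' := funext fun s => (hf.hasDerivAt s).unique (hf'.hasDerivAt s)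
  exact funext fun s => (hf.hasDerivAt_deriv s).unique (hf'.hasDerivAt_deriv s)

end HasTwoJet

section InnerProductSpace

variable {V W : Type*} [NormedAddCommGroup V] [InnerProductSpace ℝ V]
  [NormedAddCommGroup W] [InnerProductSpace ℝ W]

lemma hasTwoJet_norm_sq_add_const (u v : V) (c : ℝ) :
    HasTwoJet (fun s => ‖u + s • v‖ ^ 2 + c) (fun s => 2 * inner ℝ (u + s • v) v)
      fun _ => 2 * ‖v‖ ^ 2 := by
  have line (s : ℝ) : HasDerivAt (fun s : ℝ => u + s • v) v s := by
    simpa using ((hasDerivAt_id s).smul_const v).const_add u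
  refine ⟨fun s => (line s).norm_sq.add_const c, fun s => ?_⟩
  simpa using ((line s).inner ℝ (hasDerivAt_const s v)).const_mul 2

lemma sq_two_mul_inner_le (u v : V) (η : ℝ) :
    (2 * inner ℝ u v) ^ 2 ≤ 4 * (‖u‖ ^ 2 + η ^ 2) * ‖v‖ ^ 2 := by
  have h := real_inner_mul_inner_self_le u v
  rw [real_inner_self_eq_norm_sq, real_inner_self_eq_norm_sq] at h
  have : 0 ≤ η ^ 2 * ‖v‖ ^ 2 := by positivity
  linarith

end InnerProductSpace

lemma hasTwoJet_comp_line {V : Type*} [NormedAddCommGroup V] [NormedSpace ℝ V] {Φ : V → ℝ}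
    (hΦ : ContDiff ℝ 2 Φ) (z v : V) :
    HasTwoJet (fun s => Φ (z + s • v)) (fun s => fderiv ℝ Φ (z + s • v) v)
      fun s => fderiv ℝ (fderiv ℝ Φ) (z + s • v) v v := by
  have line (s : ℝ) : HasDerivAt (fun s : ℝ => z + s • v) v s := by
    simpa using ((hasDerivAt_id s).smul_const v).const_add z
  have hΦ' : ContDiff ℝ 1 (fderiv ℝ Φ) := hΦ.fderiv_right (by norm_num)
  refine ⟨fun s => ?_, fun s => ?_⟩
  · exact ((hΦ.differentiable (by norm_num)) _).hasFDerivAt.comp_hasDerivAt s (line s)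
  · simpa using (((hΦ'.differentiable (by norm_num)) _).hasFDerivAt.comp_hasDerivAt s
      (line s)).clm_apply (hasDerivAt_const s v)

/-- The Bellman function of Nazarov, Treil and Volberg, in the squared variables `X = |ζ| ^ 2`
and `Y = |ξ| ^ 2`. -/
def bellman (a b m d X Y : ℝ) : ℝ := X ^ a + Y ^ b + d * (X * (X ^ a + Y ^ b) ^ m)

/-- Exponents `a = p / 2`, `b = q / 2`, `m = 1 - 2 / p` of the Bellman function for conjugate
`p ≥ 2` and `q`, recorded through the relations the convexity argument uses; `d` is the small
coefficient of the mixed term. -/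
structure BellmanParams (a b m d : ℝ) : Prop where
  one_le_a : 1 ≤ a
  half_lt_b : 1 / 2 < b
  b_le_one : b ≤ 1
  m_nonneg : 0 ≤ m
  m_lt_one : m < 1
  a_mul : a * (1 - m) = 1
  b_mul : b * (1 + m) = 1
  d_eq : d = b * (2 * b - 1) / 18

lemma exists_bellmanParams {p q : ℝ} (hp : 2 ≤ p) (hpq : p.HolderConjugate q) :
    ∃ m d, BellmanParams (p / 2) (q / 2) m d := by
  have hq := hpq.symm.lt
  have hp0 : 0 < p := by linarith
  have : 0 < q := by linarith
  have sum_eq_mul : q + p = p * q := by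
    have := hpq.inv_add_inv_eq_one
    field_simp at this
    linarith
  refine ⟨1 - 2 / p, _, by linarith, by linarith, ?_, ?_, ?_, ?_, ?_, rfl⟩
  · nlinarith
  · rw [sub_nonneg, div_le_one hp0]
    exact hp
  · have : 0 < 2 / p := by positivity
    linarith
  · field_simp
    ring
  · field_simp
    nlinarith

namespace BellmanParams

variable {a b m d X Y : ℝ} (h : BellmanParams a b m d)
include h

lemma d_pos : 0 < d := by
  have := h.half_lt_b
  have : 0 < 2 * b - 1 := by linarith
  rw [h.d_eq]
  positivity

lemma a_pos : 0 < a := by linarith [h.one_le_a]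

lemma b_pos : 0 < b := by linarith [h.half_lt_b]

lemma mul_rpow_le (hX : 0 < X) (hY : 0 < Y) : X * (X ^ a + Y ^ b) ^ m ≤ X ^ a + Y ^ b := by
  have hm : 0 ≤ 1 - m := by linarith [h.m_lt_one]
  have hXa : (X ^ a) ^ (1 - m) = X := by rw [← Real.rpow_mul hX.le, h.a_mul, Real.rpow_one]
  calc X * (X ^ a + Y ^ b) ^ m = (X ^ a) ^ (1 - m) * (X ^ a + Y ^ b) ^ m := by rw [hXa]
    _ ≤ (X ^ a + Y ^ b) ^ (1 - m) * (X ^ a + Y ^ b) ^ m := by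
      gcongr
      exact le_add_of_nonneg_right (by positivity)
    _ = X ^ a + Y ^ b := by
      rw [← Real.rpow_add (by positivity), sub_add_cancel, Real.rpow_one]

lemma one_le_rpow_mul (hX : 0 < X) (hY : 0 < Y) : 1 ≤ (X ^ a + Y ^ b) ^ m * (Y ^ b / Y) := by
  have hm := h.m_nonneg
  rw [← mul_div_assoc, one_le_div hY]
  calc Y = (Y ^ b) ^ m * Y ^ b := by
        rw [← Real.rpow_mul hY.le, ← Real.rpow_add hY,
          show b * m + b = b * (1 + m) by ring, h.b_mul, Real.rpow_one]
    _ ≤ (X ^ a + Y ^ b) ^ m * Y ^ b := by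
        gcongr
        exact le_add_of_nonneg_left (by positivity)

lemma bellman_nonneg (hX : 0 < X) (hY : 0 < Y) : 0 ≤ bellman a b m d X Y := by
  have := h.d_pos
  unfold bellman
  positivity

lemma bellman_le (hX : 0 < X) (hY : 0 < Y) :
    bellman a b m d X Y ≤ (1 + d) * (X ^ a + Y ^ b) := by
  have := mul_le_mul_of_nonneg_left (h.mul_rpow_le hX hY) h.d_pos.le
  unfold bellman
  linarith

lemma rpow_second_ge {Q γ y : ℝ} (hY : 0 < Y) (hQ : 0 < Q) (hy : y ^ 2 ≤ 4 * Y * γ ^ 2) :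
    36 * d * ((Q / Y) * γ ^ 2) ≤ b * (b - 1) * (Q / Y ^ 2) * y ^ 2 + b * (Q / Y) * (2 * γ ^ 2) := by
  have hb := h.b_pos
  have hb1 : 0 ≤ 1 - b := by linarith [h.b_le_one]
  have key : b * (1 - b) * (Q / Y ^ 2) * y ^ 2 ≤ b * (1 - b) * (Q / Y ^ 2) * (4 * Y * γ ^ 2) := by
    gcongr
  have : b * (1 - b) * (Q / Y ^ 2) * (4 * Y * γ ^ 2) = 4 * b * (1 - b) * ((Q / Y) * γ ^ 2) := by
    field_simp
  rw [h.d_eq]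
  linarith

section Mixed

variable {P Q M α γ x y : ℝ} (hX : 0 < X) (hY : 0 < Y) (hP : 0 < P) (hQ : 0 < Q) (hM : 0 < M)
  (hXM : X * M ≤ P + Q)
include hX hY hP hQ hM hXM

lemma mixed_cross_ge (hx : x ^ 2 ≤ 4 * X * α ^ 2) (hy : y ^ 2 ≤ 4 * Y * γ ^ 2) :
    -(M * α ^ 2 + 16 * (Q / Y) * γ ^ 2) ≤
      2 * (m * (M / (P + Q)) * b * (Q / Y) * (Q / (P + Q))) * (x * y) := by
  have hm0 := h.m_nonneg
  have hm1 := h.m_lt_one.le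
  have hb0 := h.b_pos
  have hb1 := h.b_le_one
  have hQS : Q / (P + Q) ≤ 1 := (div_le_one (by positivity)).2 (by linarith)
  have hXMS : X * M / (P + Q) ≤ 1 := (div_le_one (by positivity)).2 hXM
  set c := m * (M / (P + Q)) * b * (Q / Y) * (Q / (P + Q)) with hc
  have hcXY : c ^ 2 * X * Y ≤ M * (Q / Y) := by
    calc c ^ 2 * X * Y
        = M * (Q / Y) * ((m * b) ^ 2 * (X * M / (P + Q)) * (Q / (P + Q)) ^ 3) := by
          rw [hc]
          field_simp
      _ ≤ M * (Q / Y) * ((1 * 1) ^ 2 * 1 * 1 ^ 3) := by gcongr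
      _ = M * (Q / Y) := by ring
  refine (abs_le_of_sq_le_sq' ?_ (by positivity)).1
  calc (2 * c * (x * y)) ^ 2 = 4 * c ^ 2 * (x ^ 2 * y ^ 2) := by ring
    _ ≤ 4 * c ^ 2 * ((4 * X * α ^ 2) * (4 * Y * γ ^ 2)) := by gcongr
    _ = 64 * (c ^ 2 * X * Y) * (α ^ 2 * γ ^ 2) := by ring
    _ ≤ 64 * (M * (Q / Y)) * (α ^ 2 * γ ^ 2) := by gcongr
    _ ≤ (M * α ^ 2 + 16 * (Q / Y) * γ ^ 2) ^ 2 := by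
        linarith [sq_nonneg (M * α ^ 2 - 16 * (Q / Y) * γ ^ 2)]

lemma mixed_square_le (hy : y ^ 2 ≤ 4 * Y * γ ^ 2) :
    X * (m * (1 - m) * (M / (P + Q) ^ 2) * (b * (Q / Y) * y) ^ 2) ≤ 4 * (Q / Y) * γ ^ 2 := by
  have := h.m_nonneg
  have hm1 : 0 ≤ 1 - m := by linarith [h.m_lt_one]
  have hb0 := h.b_pos
  have hb1 := h.b_le_one
  have hmm : m * (1 - m) ≤ 1 := by linarith [sq_nonneg m, h.m_lt_one]
  have hQS : Q / (P + Q) ≤ 1 := (div_le_one (by positivity)).2 (by linarith)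
  have hXMS : X * M / (P + Q) ≤ 1 := (div_le_one (by positivity)).2 hXM
  calc X * (m * (1 - m) * (M / (P + Q) ^ 2) * (b * (Q / Y) * y) ^ 2)
      = m * (1 - m) * (X * M / (P + Q)) * b ^ 2 * (Q / (P + Q)) * (Q / Y ^ 2) * y ^ 2 := by
        field_simp
    _ ≤ 1 * 1 * 1 ^ 2 * 1 * (Q / Y ^ 2) * (4 * Y * γ ^ 2) := by gcongr
    _ = 4 * (Q / Y) * γ ^ 2 := by field_simp

lemma mixed_second_ge (hx : x ^ 2 ≤ 4 * X * α ^ 2) (hy : y ^ 2 ≤ 4 * Y * γ ^ 2) :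
    -(M * α ^ 2 + 20 * (Q / Y) * γ ^ 2) ≤
      2 * (x * (m * (M / (P + Q)) * (a * (P / X) * x + b * (Q / Y) * y)))
        + X * (m * (m - 1) * (M / (P + Q) ^ 2) * (a * (P / X) * x + b * (Q / Y) * y) ^ 2) := by
  have := h.m_nonneg
  have ha0 := h.a_pos
  have hPS : P / (P + Q) ≤ 1 := (div_le_one (by positivity)).2 (by linarith)
  have hPQ : 1 - P / (P + Q) = Q / (P + Q) := by
    field_simp
    ring
  have hxx : 0 ≤ m * (M / (P + Q)) * a * (P / X) * (2 - P / (P + Q)) * x ^ 2 := by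
    have : 0 ≤ 2 - P / (P + Q) := by linarith
    positivity
  have expand : 2 * (x * (m * (M / (P + Q)) * (a * (P / X) * x + b * (Q / Y) * y)))
        + X * (m * (m - 1) * (M / (P + Q) ^ 2) * (a * (P / X) * x + b * (Q / Y) * y) ^ 2)
      = m * (M / (P + Q)) * a * (P / X) * (2 - a * (1 - m) * (P / (P + Q))) * x ^ 2
        + 2 * (m * (M / (P + Q)) * b * (Q / Y) * (1 - a * (1 - m) * (P / (P + Q)))) * (x * y)
        - X * (m * (1 - m) * (M / (P + Q) ^ 2) * (b * (Q / Y) * y) ^ 2) := by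
    field_simp
    ring
  rw [expand, h.a_mul, one_mul, hPQ]
  linarith [h.mixed_cross_ge hX hY hP hQ hM hXM hx hy, h.mixed_square_le hX hY hP hQ hM hXM hy]

end Mixed

lemma exists_hasTwoJet_bellman {X X' Y Y' : ℝ → ℝ} {α γ : ℝ}
    (hX : HasTwoJet X X' fun _ => 2 * α ^ 2) (hY : HasTwoJet Y Y' fun _ => 2 * γ ^ 2)
    (hX0 : ∀ s, 0 < X s) (hY0 : ∀ s, 0 < Y s)
    (hX' : ∀ s, X' s ^ 2 ≤ 4 * X s * α ^ 2) (hY' : ∀ s, Y' s ^ 2 ≤ 4 * Y s * γ ^ 2) :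
    ∃ B' B'' : ℝ → ℝ, HasTwoJet (fun s => bellman a b m d (X s) (Y s)) B' B'' ∧
      ∀ s, d * ((X s ^ a + Y s ^ b) ^ m * α ^ 2 + 16 * (Y s ^ b / Y s) * γ ^ 2) ≤ B'' s := by
  have hP (s : ℝ) : 0 < X s ^ a := Real.rpow_pos_of_pos (hX0 s) a
  have hQ (s : ℝ) : 0 < Y s ^ b := Real.rpow_pos_of_pos (hY0 s) b
  have jetS := (hX.rpow_const hX0 a).add (hY.rpow_const hY0 b)
  have jetM := jetS.rpow_const (fun s => add_pos (hP s) (hQ s)) m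
  refine ⟨_, _, jetS.add ((hX.mul jetM).const_mul d), fun s => ?_⟩
  have hd := h.d_pos
  have hm := h.m_nonneg
  have ha : 0 ≤ a - 1 := by linarith [h.one_le_a]
  have ha0 := h.a_pos
  have hXs := hX0 s
  have hPs := hP s
  have hQs := hQ s
  have hM : 0 < (X s ^ a + Y s ^ b) ^ m := by positivity
  have hY₂ := h.rpow_second_ge (hY0 s) hQs (hY' s)
  have hmix := mul_le_mul_of_nonneg_left (h.mixed_second_ge hXs (hY0 s) hPs hQs hM
    (h.mul_rpow_le hXs (hY0 s)) (hX' s) (hY' s)) hd.le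
  have hX₂ : 0 ≤ a * (a - 1) * (X s ^ a / X s ^ 2) * X' s ^ 2
      + a * (X s ^ a / X s) * (2 * α ^ 2) := by positivity
  have hN : 0 ≤ 36 * d * (Y s ^ b / Y s * γ ^ 2) := by have := hY0 s; positivity
  have hS₂ := mul_nonneg (by positivity :
    0 ≤ d * (X s * (m * ((X s ^ a + Y s ^ b) ^ m / (X s ^ a + Y s ^ b)))))
    (add_nonneg hX₂ (hN.trans hY₂))
  linarith

end BellmanParams

section Regularized

variable {V W : Type*} [NormedAddCommGroup V] [InnerProductSpace ℝ V]
  [NormedAddCommGroup W] [InnerProductSpace ℝ W] {a b m d η : ℝ}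

/-- The Bellman function of two vectors, with the squared norms shifted by `η ^ 2` to make it
smooth. -/
def regBellman (a b m d η : ℝ) (z : V × W) : ℝ :=
  bellman a b m d (‖z.1‖ ^ 2 + η ^ 2) (‖z.2‖ ^ 2 + η ^ 2)

lemma contDiff_regBellman (a b m d : ℝ) (hη : 0 < η) :
    ContDiff ℝ ∞ (regBellman a b m d η : V × W → ℝ) := by
  have hX : ContDiff ℝ ∞ fun z : V × W => ‖z.1‖ ^ 2 + η ^ 2 :=
    (contDiff_fst.norm_sq ℝ).add contDiff_const
  have hY : ContDiff ℝ ∞ fun z : V × W => ‖z.2‖ ^ 2 + η ^ 2 :=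
    (contDiff_snd.norm_sq ℝ).add contDiff_const
  have hS := (hX.rpow_const_of_ne (p := a) fun z => by positivity).add
    (hY.rpow_const_of_ne (p := b) fun z => by positivity)
  exact hS.add (contDiff_const.mul (hX.mul (hS.rpow_const_of_ne (p := m) fun z => by positivity)))

namespace BellmanParams

variable (h : BellmanParams a b m d)
include h

lemma hessian_regBellman_ge (hη : 0 < η) (z v : V × W) :
    d * (((‖z.1‖ ^ 2 + η ^ 2) ^ a + (‖z.2‖ ^ 2 + η ^ 2) ^ b) ^ m * ‖v.1‖ ^ 2
      + 16 * ((‖z.2‖ ^ 2 + η ^ 2) ^ b / (‖z.2‖ ^ 2 + η ^ 2)) * ‖v.2‖ ^ 2)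
      ≤ fderiv ℝ (fderiv ℝ (regBellman a b m d η)) z v v := by
  obtain ⟨B', B'', hB, hB''⟩ := h.exists_hasTwoJet_bellman
    (hasTwoJet_norm_sq_add_const z.1 v.1 (η ^ 2)) (hasTwoJet_norm_sq_add_const z.2 v.2 (η ^ 2))
    (fun s => by positivity) (fun s => by positivity)
    (fun s => sq_two_mul_inner_le _ _ η) (fun s => sq_two_mul_inner_le _ _ η)
  have hline := hasTwoJet_comp_line ((contDiff_regBellman a b m d hη).of_le
    (by exact_mod_cast ENat.LEInfty.out)) z v
  have := congrFun (hB.eq_second hline) 0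
  simpa [this] using hB'' 0

lemma le_sum_hessian_regBellman {ι : Type*} [Fintype ι] (hη : 0 < η) (z : V × W) (v : ι → V × W)
    (j k : ι) :
    8 * d * (‖(v j).1‖ * ‖(v k).2‖)
      ≤ ∑ i, fderiv ℝ (fderiv ℝ (regBellman a b m d η)) z (v i) (v i) := by
  set X := ‖z.1‖ ^ 2 + η ^ 2
  set Y := ‖z.2‖ ^ 2 + η ^ 2
  have hX : 0 < X := by positivity
  have hY : 0 < Y := by positivity
  have hd := h.d_pos
  set M := (X ^ a + Y ^ b) ^ m
  set N := Y ^ b / Y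
  have : 0 ≤ M := by positivity
  have : 0 ≤ N := by positivity
  have amgm : 8 * (‖(v j).1‖ * ‖(v k).2‖) ≤ M * ‖(v j).1‖ ^ 2 + 16 * N * ‖(v k).2‖ ^ 2 := by
    refine (abs_le_of_sq_le_sq' ?_ (by positivity)).2
    calc (8 * (‖(v j).1‖ * ‖(v k).2‖)) ^ 2 = 64 * 1 * (‖(v j).1‖ ^ 2 * ‖(v k).2‖ ^ 2) := by ring
      _ ≤ 64 * (M * N) * (‖(v j).1‖ ^ 2 * ‖(v k).2‖ ^ 2) := by
          gcongr
          exact h.one_le_rpow_mul hX hY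
      _ ≤ (M * ‖(v j).1‖ ^ 2 + 16 * N * ‖(v k).2‖ ^ 2) ^ 2 := by
          linarith [sq_nonneg (M * ‖(v j).1‖ ^ 2 - 16 * N * ‖(v k).2‖ ^ 2)]
  calc 8 * d * (‖(v j).1‖ * ‖(v k).2‖) = d * (8 * (‖(v j).1‖ * ‖(v k).2‖)) := by ring
    _ ≤ d * (M * ‖(v j).1‖ ^ 2 + 16 * N * ‖(v k).2‖ ^ 2) := by gcongr
    _ ≤ d * (∑ i, M * ‖(v i).1‖ ^ 2 + ∑ i, 16 * N * ‖(v i).2‖ ^ 2) := by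
        gcongr
        · exact Finset.single_le_sum (f := fun i => M * ‖(v i).1‖ ^ 2)
            (fun i _ => by positivity) (Finset.mem_univ j)
        · exact Finset.single_le_sum (f := fun i => 16 * N * ‖(v i).2‖ ^ 2)
            (fun i _ => by positivity) (Finset.mem_univ k)
    _ = ∑ i, d * (M * ‖(v i).1‖ ^ 2 + 16 * N * ‖(v i).2‖ ^ 2) := by
        rw [← Finset.sum_add_distrib, Finset.mul_sum]
    _ ≤ _ := Finset.sum_le_sum fun i _ => h.hessian_regBellman_ge hη z (v i)

end BellmanParams

end Regularized

end Bellman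

/-! ### Energy estimates for the heat equation -/

section SpaceTime

open Filter Topology
open scoped ContDiff

/-- Jointly continuous and bounded functions of time and space, the class in which the parabolic
estimates below are carried out. -/
structure BddCont {X V : Type*} [TopologicalSpace X] [NormedAddCommGroup V] (φ : ℝ → X → V) :
    Prop where
  continuous : Continuous fun z : ℝ × X => φ z.1 z.2
  bounded : ∃ C, ∀ t x, ‖φ t x‖ ≤ C

namespace BddCont

section Composition

variable {X V W : Type*} [TopologicalSpace X] [NormedAddCommGroup V] [NormedAddCommGroup W]
  {φ : ℝ → X → V} {ψ : ℝ → X → W}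

lemma prodMk (hφ : BddCont φ) (hψ : BddCont ψ) : BddCont fun t x => (φ t x, ψ t x) := by
  obtain ⟨C, hC⟩ := hφ.bounded
  obtain ⟨D, hD⟩ := hψ.bounded
  exact ⟨hφ.continuous.prodMk hψ.continuous, max C D, fun t x => max_le_max (hC t x) (hD t x)⟩

lemma comp [ProperSpace V] {Ψ : V → W} (hΨ : Continuous Ψ) (hφ : BddCont φ) :
    BddCont fun t x => Ψ (φ t x) := by
  obtain ⟨C, hC⟩ := hφ.bounded
  obtain ⟨K, hK⟩ := (isCompact_closedBall (0 : V) C).exists_bound_of_continuousOn hΨ.continuousOn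
  exact ⟨hΨ.comp hφ.continuous, K, fun t x => hK _ (mem_closedBall_zero_iff.2 (hC t x))⟩

lemma sum {ι : Type*} [Fintype ι] {φ : ι → ℝ → X → V} (hφ : ∀ i, BddCont (φ i)) :
    BddCont fun t x => ∑ i, φ i t x := by
  choose C hC using fun i => (hφ i).bounded
  exact ⟨continuous_finsetSum _ fun i _ => (hφ i).continuous, ∑ i, C i, fun t x =>
    (norm_sum_le _ _).trans (Finset.sum_le_sum fun i _ => hC i t x)⟩

lemma continuous_apply (hφ : BddCont φ) (t : ℝ) : Continuous (φ t) :=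
  hφ.continuous.comp (Continuous.prodMk_right t)

lemma continuous_time (hφ : BddCont φ) (x : X) : Continuous fun t => φ t x :=
  hφ.continuous.comp (Continuous.prodMk_left x)

end Composition

section Integral

variable {X : Type*} [TopologicalSpace X] [MeasurableSpace X] [OpensMeasurableSpace X]
  {μ : Measure X} {φ ψ : ℝ → X → ℝ} {w : X → ℝ}

lemma integrable_mul (hφ : BddCont φ) (hw : Integrable w μ) (t : ℝ) :
    Integrable (fun x => φ t x * w x) μ := by
  obtain ⟨C, hC⟩ := hφ.bounded
  exact hw.bdd_mul (c := C) (hφ.continuous_apply t).aestronglyMeasurable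
    (Eventually.of_forall fun x => hC t x)

lemma continuous_integral (hφ : BddCont φ) (hw : Integrable w μ) :
    Continuous fun t => ∫ x, φ t x * w x ∂μ := by
  obtain ⟨C, hC⟩ := hφ.bounded
  refine continuous_of_dominated (bound := fun x => C * ‖w x‖)
    (fun t => (hφ.integrable_mul hw t).aestronglyMeasurable)
    (fun t => Eventually.of_forall fun x => ?_) (hw.norm.const_mul C)
    (Eventually.of_forall fun x => (hφ.continuous_time x).mul_const _)
  rw [norm_mul]
  gcongr
  exact hC t x

lemma hasDerivAt_integral (hφ : BddCont φ) (hψ : BddCont ψ) (hw : Integrable w μ)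
    (h : ∀ t x, 0 < t → HasDerivAt (fun s => φ s x) (ψ t x) t) {t : ℝ} (ht : 0 < t) :
    HasDerivAt (fun t => ∫ x, φ t x * w x ∂μ) (∫ x, ψ t x * w x ∂μ) t := by
  obtain ⟨C, hC⟩ := hψ.bounded
  refine (hasDerivAt_integral_of_dominated_loc_of_deriv_le (bound := fun x => C * ‖w x‖)
    (F' := fun s x => ψ s x * w x) (s := Ioi 0) (Ioi_mem_nhds ht)
    (Eventually.of_forall fun s => (hφ.integrable_mul hw s).aestronglyMeasurable)
    (hφ.integrable_mul hw t) (hψ.integrable_mul hw t).aestronglyMeasurable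
    (Eventually.of_forall fun x s _ => ?_) (hw.norm.const_mul C)
    (Eventually.of_forall fun x s hs => (h s x hs).mul_const _)).2
  rw [norm_mul]
  gcongr
  exact hC s x

lemma lintegral_Ioi_le_of_forall_Ioc [SecondCountableTopology X] [SFinite μ] (hφ : BddCont φ)
    {M : ℝ≥0∞} (h : ∀ T : ℝ, 0 ≤ T → ∫⁻ t in Ioc 0 T, ∫⁻ x, ENNReal.ofReal (φ t x) ∂μ ≤ M) :
    ∫⁻ t in Ioi (0 : ℝ), ∫⁻ x, ENNReal.ofReal (φ t x) ∂μ ≤ M := by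
  have hmeas : Measurable fun t => ∫⁻ x, ENNReal.ofReal (φ t x) ∂μ :=
    (ENNReal.continuous_ofReal.comp hφ.continuous).measurable.lintegral_prod_right'
  refine le_of_tendsto ((aecover_Iic tendsto_id).lintegral_tendsto_of_countably_generated
    hmeas.aemeasurable) ?_
  filter_upwards [eventually_ge_atTop 0] with T hT
  rw [Measure.restrict_restrict measurableSet_Iic, inter_comm, Ioi_inter_Iic]
  exact h T hT

end Integral

end BddCont

/-- `ut` is the time derivative of `u` for positive times, `u1 i` and `u2 i` are its first and
second derivatives in the direction `e i`, and all of these are bounded and continuous. -/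
structure BddJet {ι E V : Type*} [NormedAddCommGroup E] [NormedSpace ℝ E]
    [NormedAddCommGroup V] [NormedSpace ℝ V] (e : ι → E) (u ut : ℝ → E → V)
    (u1 u2 : ι → ℝ → E → V) : Prop where
  zeroth : BddCont u
  time : BddCont ut
  first : ∀ i, BddCont (u1 i)
  second : ∀ i, BddCont (u2 i)
  hasDerivAt_time : ∀ t x, 0 < t → HasDerivAt (fun s => u s x) (ut t x) t
  hasLineDerivAt_zeroth : ∀ i t x, HasLineDerivAt ℝ (u t) (u1 i t x) x (e i)
  hasLineDerivAt_first : ∀ i t x, HasLineDerivAt ℝ (u1 i t) (u2 i t x) x (e i)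

namespace BddJet

variable {ι E V W : Type*} [NormedAddCommGroup E] [NormedSpace ℝ E]
  [NormedAddCommGroup V] [NormedSpace ℝ V] [NormedAddCommGroup W] [NormedSpace ℝ W] {e : ι → E}
  {u ut : ℝ → E → V} {u1 u2 : ι → ℝ → E → V} {v vt : ℝ → E → W} {v1 v2 : ι → ℝ → E → W}

lemma prodMk (hu : BddJet e u ut u1 u2) (hv : BddJet e v vt v1 v2) :
    BddJet e (fun t x => (u t x, v t x)) (fun t x => (ut t x, vt t x))
      (fun i t x => (u1 i t x, v1 i t x)) (fun i t x => (u2 i t x, v2 i t x)) where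
  zeroth := hu.zeroth.prodMk hv.zeroth
  time := hu.time.prodMk hv.time
  first i := (hu.first i).prodMk (hv.first i)
  second i := (hu.second i).prodMk (hv.second i)
  hasDerivAt_time t x ht := (hu.hasDerivAt_time t x ht).prodMk (hv.hasDerivAt_time t x ht)
  hasLineDerivAt_zeroth i t x :=
    HasDerivAt.prodMk (hu.hasLineDerivAt_zeroth i t x) (hv.hasLineDerivAt_zeroth i t x)
  hasLineDerivAt_first i t x :=
    HasDerivAt.prodMk (hu.hasLineDerivAt_first i t x) (hv.hasLineDerivAt_first i t x)

lemma comp [ProperSpace V] {Φ : V → W} (hΦ : ContDiff ℝ 2 Φ) (hu : BddJet e u ut u1 u2) :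
    BddJet e (fun t x => Φ (u t x)) (fun t x => fderiv ℝ Φ (u t x) (ut t x))
      (fun i t x => fderiv ℝ Φ (u t x) (u1 i t x))
      (fun i t x => fderiv ℝ (fderiv ℝ Φ) (u t x) (u1 i t x) (u1 i t x)
        + fderiv ℝ Φ (u t x) (u2 i t x)) := by
  have hΦ' : ContDiff ℝ 1 (fderiv ℝ Φ) := hΦ.fderiv_right (by norm_num)
  have hΦ'c : Continuous (fderiv ℝ Φ) := hΦ'.continuous
  have : Continuous (fderiv ℝ (fderiv ℝ Φ)) := hΦ'.continuous_fderiv one_ne_zero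
  have hasFDerivAt_Φ (z : V) : HasFDerivAt Φ (fderiv ℝ Φ z) z :=
    (hΦ.differentiable two_ne_zero z).hasFDerivAt
  have hasFDerivAt_Φ' (z : V) : HasFDerivAt (fderiv ℝ Φ) (fderiv ℝ (fderiv ℝ Φ) z) z :=
    (hΦ'.differentiable one_ne_zero z).hasFDerivAt
  refine ⟨hu.zeroth.comp hΦ.continuous,
    (hu.zeroth.prodMk hu.time).comp (Ψ := fun z => fderiv ℝ Φ z.1 z.2) (by fun_prop),
    fun i => (hu.zeroth.prodMk (hu.first i)).comp (Ψ := fun z => fderiv ℝ Φ z.1 z.2)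
      (by fun_prop),
    fun i => (hu.zeroth.prodMk ((hu.first i).prodMk (hu.second i))).comp
      (Ψ := fun z => fderiv ℝ (fderiv ℝ Φ) z.1 z.2.1 z.2.1 + fderiv ℝ Φ z.1 z.2.2)
      (by fun_prop),
    fun t x ht => (hasFDerivAt_Φ _).comp_hasDerivAt t (hu.hasDerivAt_time t x ht),
    fun i t x => ?_, fun i t x => ?_⟩
  · exact (hasFDerivAt_Φ (u t x)).comp_hasDerivAt_of_eq 0 (hu.hasLineDerivAt_zeroth i t x)
      (by simp)
  · simpa [HasLineDerivAt] using HasDerivAt.clm_apply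
      ((hasFDerivAt_Φ' (u t x)).comp_hasDerivAt_of_eq 0 (hu.hasLineDerivAt_zeroth i t x)
        (by simp)) (hu.hasLineDerivAt_first i t x)

end BddJet

/-- An integrable weight `0 ≤ w ≤ 1` with `w 0 = 1` and integrable derivatives along the vectors
`e i`, for which `∑ i, ∂_{e i}² w ≤ K w`; integrating against it localises the heat equation. -/
structure HeatWeight {ι E : Type*} [Fintype ι] [NormedAddCommGroup E] [NormedSpace ℝ E]
    [MeasureSpace E] (e : ι → E) (w : E → ℝ) (w1 w2 : ι → E → ℝ) (K : ℝ) : Prop where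
  continuous : Continuous w
  nonneg : ∀ x, 0 ≤ w x
  le_one : ∀ x, w x ≤ 1
  zero_eq_one : w 0 = 1
  integrable : Integrable w
  integrable_first : ∀ i, Integrable (w1 i)
  integrable_second : ∀ i, Integrable (w2 i)
  hasLineDerivAt_zeroth : ∀ i x, HasLineDerivAt ℝ w (w1 i x) x (e i)
  hasLineDerivAt_first : ∀ i x, HasLineDerivAt ℝ (w1 i) (w2 i x) x (e i)
  sum_second_le : ∀ x, ∑ i, w2 i x ≤ K * w x

lemma hasLineDerivAt_comp_smul {E : Type*} [NormedAddCommGroup E] [NormedSpace ℝ E] {f : E → ℝ}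
    {f' : ℝ} {x v : E} {δ : ℝ} (h : HasLineDerivAt ℝ f f' (δ • x) v) :
    HasLineDerivAt ℝ (fun y => f (δ • y)) (δ * f') x v := by
  simpa [HasLineDerivAt, smul_comm δ] using h.smul δ

section Energy

variable {ι E : Type*} [Fintype ι] [NormedAddCommGroup E] [NormedSpace ℝ E]
  [FiniteDimensional ℝ E] [MeasureSpace E] [BorelSpace E]
  [(volume : Measure E).IsAddHaarMeasure] {e : ι → E} {w : E → ℝ} {w1 w2 : ι → E → ℝ} {K : ℝ}

lemma HeatWeight.scale (hw : HeatWeight e w w1 w2 K) {δ : ℝ} (hδ : 0 < δ) :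
    HeatWeight e (fun x => w (δ • x)) (fun i x => δ * w1 i (δ • x))
      (fun i x => δ * (δ * w2 i (δ • x))) (δ ^ 2 * K) where
  continuous := hw.continuous.comp (continuous_const_smul δ)
  nonneg _ := hw.nonneg _
  le_one _ := hw.le_one _
  zero_eq_one := by simp [hw.zero_eq_one]
  integrable := hw.integrable.comp_smul hδ.ne'
  integrable_first i := ((hw.integrable_first i).comp_smul hδ.ne').const_mul δ
  integrable_second i := (((hw.integrable_second i).comp_smul hδ.ne').const_mul δ).const_mul δ
  hasLineDerivAt_zeroth i x := hasLineDerivAt_comp_smul (hw.hasLineDerivAt_zeroth i _)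
  hasLineDerivAt_first i x :=
    HasDerivAt.const_mul δ (hasLineDerivAt_comp_smul (hw.hasLineDerivAt_first i _))
  sum_second_le x := by
    simp only [← Finset.mul_sum]
    calc δ * (δ * ∑ i, w2 i (δ • x)) ≤ δ * (δ * (K * w (δ • x))) := by
          gcongr
          exact hw.sum_second_le _
      _ = δ ^ 2 * K * w (δ • x) := by ring

variable {φ φt D : ℝ → E → ℝ} {φ1 φ2 : ι → ℝ → E → ℝ}

lemma BddJet.integral_second_mul_eq (hφ : BddJet e φ φt φ1 φ2) (hw : HeatWeight e w w1 w2 K)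
    (i : ι) (t : ℝ) : ∫ x, φ2 i t x * w x = ∫ x, φ t x * w2 i x := by
  have i1 := integral_bilinear_hasLineDerivAt_right_eq_neg_left_of_integrable
    (B := ContinuousLinearMap.mul ℝ ℝ) (v := e i) (μ := volume)
    ((hφ.second i).integrable_mul hw.integrable t)
    ((hφ.first i).integrable_mul (hw.integrable_first i) t)
    ((hφ.first i).integrable_mul hw.integrable t)
    (fun x _ => hφ.hasLineDerivAt_first i t x) (fun x _ => hw.hasLineDerivAt_zeroth i x)
  have i2 := integral_bilinear_hasLineDerivAt_right_eq_neg_left_of_integrable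
    (B := ContinuousLinearMap.mul ℝ ℝ) (v := e i) (μ := volume)
    ((hφ.first i).integrable_mul (hw.integrable_first i) t)
    (hφ.zeroth.integrable_mul (hw.integrable_second i) t)
    (hφ.zeroth.integrable_mul (hw.integrable_first i) t)
    (fun x _ => hφ.hasLineDerivAt_zeroth i t x) (fun x _ => hw.hasLineDerivAt_first i x)
  simp only [ContinuousLinearMap.mul_apply'] at i1 i2
  linarith

lemma BddJet.integral_time_add_le (hφ : BddJet e φ φt φ1 φ2) (h0 : ∀ t x, 0 ≤ φ t x)
    (hD : BddCont D) (hle : ∀ t x, φt t x + D t x ≤ ∑ i, φ2 i t x)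
    (hw : HeatWeight e w w1 w2 K) (t : ℝ) :
    (∫ x, φt t x * w x) + ∫ x, D t x * w x ≤ K * ∫ x, φ t x * w x := by
  have hsecond (i : ι) := hφ.zeroth.integrable_mul (hw.integrable_second i) t
  have hφ2 (i : ι) := (hφ.second i).integrable_mul hw.integrable t
  have hφt := hφ.time.integrable_mul hw.integrable t
  have hDw := hD.integrable_mul hw.integrable t
  calc _ = ∫ x, (φt t x * w x + D t x * w x) := (integral_add hφt hDw).symm
    _ ≤ ∫ x, ∑ i, φ2 i t x * w x := by
        refine integral_mono (hφt.add hDw) (integrable_finsetSum _ fun i _ => hφ2 i) fun x => ?_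
        simpa only [add_mul, Finset.sum_mul]
          using mul_le_mul_of_nonneg_right (hle t x) (hw.nonneg x)
    _ = ∑ i, ∫ x, φ t x * w2 i x := by
        rw [integral_finsetSum _ fun i _ => hφ2 i]
        exact Finset.sum_congr rfl fun i _ => hφ.integral_second_mul_eq hw i t
    _ = ∫ x, ∑ i, φ t x * w2 i x := (integral_finsetSum _ fun i _ => hsecond i).symm
    _ ≤ ∫ x, K * (φ t x * w x) := by
        refine integral_mono (integrable_finsetSum _ fun i _ => hsecond i)
          ((hφ.zeroth.integrable_mul hw.integrable t).const_mul K) fun x => ?_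
        simpa only [Finset.mul_sum, mul_left_comm]
          using mul_le_mul_of_nonneg_left (hw.sum_second_le x) (h0 t x)
    _ = _ := integral_const_mul _ _

lemma exp_mul_integral_le_of_deriv_add_le {J J' I : ℝ → ℝ} (hJ : Continuous J) (hI : Continuous I)
    (hJ' : ∀ t, 0 < t → HasDerivAt J (J' t) t) (h : ∀ t, J' t + I t ≤ K * J t) {T : ℝ}
    (hT : 0 ≤ T) :
    Real.exp (-K * T) * J T + ∫ t in (0 : ℝ)..T, Real.exp (-K * t) * I t ≤ J 0 := by
  have hexp : Continuous fun t : ℝ => Real.exp (-K * t) := by fun_prop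
  have hexp' (t : ℝ) : HasDerivAt (fun t : ℝ => Real.exp (-K * t))
      (Real.exp (-K * t) * (-K * 1)) t := ((hasDerivAt_id t).const_mul (-K)).exp
  have hprimitive (t : ℝ) : HasDerivAt (fun t => ∫ s in (0 : ℝ)..t, Real.exp (-K * s) * I s)
      (Real.exp (-K * t) * I t) t :=
    intervalIntegral.integral_hasDerivAt_right ((hexp.mul hI).intervalIntegrable _ _)
      ((hexp.mul hI).stronglyMeasurableAtFilter _ _) (hexp.mul hI).continuousAt
  set L : ℝ → ℝ := fun t =>
    Real.exp (-K * t) * J t + ∫ s in (0 : ℝ)..t, Real.exp (-K * s) * I s with hL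
  have hL' (t : ℝ) (ht : 0 < t) : HasDerivAt L _ t := ((hexp' t).mul (hJ' t ht)).add (hprimitive t)
  have hanti : AntitoneOn L (Ici 0) := by
    refine antitoneOn_of_deriv_nonpos (convex_Ici 0) ?_ ?_ ?_
    · exact ((hexp.mul hJ).add
        (continuous_iff_continuousAt.2 fun t => (hprimitive t).continuousAt)).continuousOn
    all_goals
      intro t ht
      rw [interior_Ici] at ht
    · exact (hL' t ht).differentiableAt.differentiableWithinAt
    · rw [(hL' t ht).deriv]
      have := mul_le_mul_of_nonneg_left (h t) (Real.exp_pos (-K * t)).le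
      linarith
  simpa [hL] using hanti (mem_Ici.2 le_rfl) (mem_Ici.2 hT) hT

lemma BddJet.energy_le (hφ : BddJet e φ φt φ1 φ2) (h0 : ∀ t x, 0 ≤ φ t x) (hD : BddCont D)
    (hle : ∀ t x, φt t x + D t x ≤ ∑ i, φ2 i t x) (hw : HeatWeight e w w1 w2 K) {T : ℝ}
    (hT : 0 ≤ T) :
    ∫ t in (0 : ℝ)..T, Real.exp (-K * t) * ∫ x, D t x * w x ≤ ∫ x, φ 0 x * w x := by
  refine le_trans (le_add_of_nonneg_left (mul_nonneg (Real.exp_pos _).le ?_))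
    (exp_mul_integral_le_of_deriv_add_le (hφ.zeroth.continuous_integral hw.integrable)
      (hD.continuous_integral hw.integrable)
      (fun t ht => hφ.zeroth.hasDerivAt_integral hφ.time hw.integrable hφ.hasDerivAt_time ht)
      (fun t => hφ.integral_time_add_le h0 hD hle hw t) hT)
  exact integral_nonneg fun x => mul_nonneg (h0 T x) (hw.nonneg x)

end Energy

end SpaceTime

section Weights

open Filter Topology Module

lemma abs_rpow_first_le {X x : ℝ} (hX : 1 ≤ X) (hx : x ^ 2 ≤ 4 * X * 1 ^ 2) (c : ℝ) :
    |c * (X ^ c / X) * x| ≤ 2 * |c| * X ^ c := by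
  have hX0 : 0 < X := by linarith
  have hx' : |x| ≤ 2 * X := abs_le_of_sq_le_sq (by nlinarith) (by positivity)
  calc |c * (X ^ c / X) * x| = |c| * (X ^ c / X) * |x| := by
        rw [abs_mul, abs_mul, abs_of_pos (div_pos (Real.rpow_pos_of_pos hX0 c) hX0)]
    _ ≤ |c| * (X ^ c / X) * (2 * X) := by gcongr
    _ = 2 * |c| * X ^ c := by field_simp

lemma abs_rpow_second_le {X x : ℝ} (hX : 1 ≤ X) (hx : x ^ 2 ≤ 4 * X * 1 ^ 2) (c : ℝ) :
    |c * (c - 1) * (X ^ c / X ^ 2) * x ^ 2 + c * (X ^ c / X) * (2 * 1 ^ 2)|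
      ≤ (4 * |c * (c - 1)| + 2 * |c|) * X ^ c := by
  have hX0 : 0 < X := by linarith
  have : 0 < X ^ c := Real.rpow_pos_of_pos hX0 c
  have habs₂ : |c * (c - 1) * (X ^ c / X ^ 2) * x ^ 2|
      = |c * (c - 1)| * (X ^ c / X ^ 2 * x ^ 2) := by
    rw [mul_assoc, abs_mul, abs_of_nonneg (a := X ^ c / X ^ 2 * x ^ 2) (by positivity)]
  have habs₁ : |c * (X ^ c / X) * (2 * 1 ^ 2)| = |c| * (X ^ c / X) * 2 := by
    rw [abs_mul, abs_mul, abs_of_pos (a := X ^ c / X) (by positivity)]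
    norm_num
  calc |c * (c - 1) * (X ^ c / X ^ 2) * x ^ 2 + c * (X ^ c / X) * (2 * 1 ^ 2)|
      ≤ |c * (c - 1) * (X ^ c / X ^ 2) * x ^ 2| + |c * (X ^ c / X) * (2 * 1 ^ 2)| :=
        abs_add_le _ _
    _ = |c * (c - 1)| * (X ^ c / X ^ 2 * x ^ 2) + |c| * (X ^ c / X) * 2 := by
        rw [habs₁, habs₂]
    _ ≤ |c * (c - 1)| * (X ^ c / X ^ 2 * (4 * X ^ 2)) + |c| * (X ^ c / 1) * 2 := by
        gcongr
        nlinarith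
    _ = (4 * |c * (c - 1)| + 2 * |c|) * X ^ c := by field_simp

variable {ι E : Type*} [Fintype ι] [NormedAddCommGroup E] {e : ι → E}

lemma exists_heatWeight [InnerProductSpace ℝ E] [FiniteDimensional ℝ E] [MeasureSpace E]
    [BorelSpace E] [(volume : Measure E).IsAddHaarMeasure] (he : ∀ i, ‖e i‖ = 1) :
    ∃ w w1 w2 K, HeatWeight e w w1 w2 K := by
  set c : ℝ := -(finrank ℝ E + 1) / 2
  have hc0 : c ≤ 0 := div_nonpos_of_nonpos_of_nonneg (neg_nonpos.2 (by positivity)) zero_le_two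
  have hjet (x : E) (i : ι) := (hasTwoJet_norm_sq_add_const x (e i) 1).rpow_const
    (fun s => by positivity) c
  simp only [he] at hjet
  have hX (x : E) : 1 ≤ ‖x‖ ^ 2 + 1 := by linarith [sq_nonneg ‖x‖]
  have hx (x : E) (i : ι) : (2 * inner ℝ x (e i)) ^ 2 ≤ 4 * (‖x‖ ^ 2 + 1) * 1 ^ 2 := by
    simpa [he] using sq_two_mul_inner_le x (e i) 1
  have hintegrable : Integrable fun x : E => (‖x‖ ^ 2 + 1) ^ c := by
    simpa only [add_comm (1 : ℝ)] using
      integrable_rpow_neg_one_add_norm_sq (μ := (volume : Measure E)) (r := finrank ℝ E + 1)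
        (lt_add_one _)
  refine ⟨fun x => (‖x‖ ^ 2 + 1) ^ c,
    fun i x => c * ((‖x‖ ^ 2 + 1) ^ c / (‖x‖ ^ 2 + 1)) * (2 * inner ℝ x (e i)),
    fun i x => c * (c - 1) * ((‖x‖ ^ 2 + 1) ^ c / (‖x‖ ^ 2 + 1) ^ 2) * (2 * inner ℝ x (e i)) ^ 2
      + c * ((‖x‖ ^ 2 + 1) ^ c / (‖x‖ ^ 2 + 1)) * (2 * 1 ^ 2),
    ∑ _ : ι, (4 * |c * (c - 1)| + 2 * |c|), ?_⟩
  refine ⟨?_, fun x => by positivity, fun x => ?_, by simp, hintegrable, fun i => ?_, fun i => ?_,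
    fun i x => ?_, fun i x => ?_, fun x => ?_⟩
  · exact Continuous.rpow_const (by fun_prop) fun x => Or.inl (by positivity)
  · exact Real.rpow_le_one_of_one_le_of_nonpos (hX x) hc0
  · exact (hintegrable.const_mul (2 * |c|)).mono' (Measurable.aestronglyMeasurable (by fun_prop))
      (Eventually.of_forall fun x => abs_rpow_first_le (hX x) (hx x i) c)
  · exact (hintegrable.const_mul _).mono' (Measurable.aestronglyMeasurable (by fun_prop))
      (Eventually.of_forall fun x => abs_rpow_second_le (hX x) (hx x i) c)
  · simpa [HasLineDerivAt] using (hjet x i).hasDerivAt 0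
  · simpa [HasLineDerivAt] using (hjet x i).hasDerivAt_deriv 0
  · rw [Finset.sum_mul]
    exact Finset.sum_le_sum fun i _ => (abs_le.1 (abs_rpow_second_le (hX x) (hx x i) c)).2

variable [NormedSpace ℝ E] [MeasureSpace E] [BorelSpace E]
  {w : E → ℝ} {w1 w2 : ι → E → ℝ} {K : ℝ} {D : ℝ → E → ℝ} {M : ℝ}

lemma BddCont.lintegral_weighted_eq (hD : BddCont D) (h0 : ∀ t x, 0 ≤ D t x)
    (hw : HeatWeight e w w1 w2 K) {T : ℝ} (hT : 0 ≤ T) :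
    ∫⁻ t in Ioc 0 T, ∫⁻ x, ENNReal.ofReal (Real.exp (-K * t) * (D t x * w x))
      = ENNReal.ofReal (∫ t in (0 : ℝ)..T, Real.exp (-K * t) * ∫ x, D t x * w x) := by
  have hcont : Continuous fun t => Real.exp (-K * t) * ∫ x, D t x * w x :=
    Continuous.mul (by fun_prop) (hD.continuous_integral hw.integrable)
  have hDw (t : ℝ) (x : E) : 0 ≤ D t x * w x := mul_nonneg (h0 t x) (hw.nonneg x)
  rw [intervalIntegral.integral_of_le hT, ofReal_integral_eq_lintegral_ofReal hcont.integrableOn_Ioc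
    (Eventually.of_forall fun t => mul_nonneg (Real.exp_pos _).le (integral_nonneg (hDw t)))]
  refine lintegral_congr fun t => ?_
  rw [← integral_const_mul, ofReal_integral_eq_lintegral_ofReal
    ((hD.integrable_mul hw.integrable t).const_mul _)
    (Eventually.of_forall fun x => mul_nonneg (Real.exp_pos _).le (hDw t x))]

lemma BddCont.lintegral_Ioc_le_of_forall_weighted [FiniteDimensional ℝ E]
    [(volume : Measure E).IsAddHaarMeasure]
    (hD : BddCont D) (h0 : ∀ t x, 0 ≤ D t x) (hw : HeatWeight e w w1 w2 K) {T : ℝ} (hT : 0 ≤ T)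
    (h : ∀ δ : ℝ, 0 < δ → ∫ t in (0 : ℝ)..T, Real.exp (-(δ ^ 2 * K) * t)
      * ∫ x, D t x * w (δ • x) ≤ M) :
    ∫⁻ t in Ioc 0 T, ∫⁻ x, ENNReal.ofReal (D t x) ≤ ENNReal.ofReal M := by
  set δ : ℕ → ℝ := fun n => 1 / ((n : ℝ) + 1)
  have hδ (n : ℕ) : 0 < δ n := by positivity
  have hδlim : Tendsto δ atTop (𝓝 0) := tendsto_one_div_add_atTop_nhds_zero_nat
  set F : ℝ → ℝ × E → ℝ≥0∞ := fun δ z =>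
    ENNReal.ofReal (Real.exp (-(δ ^ 2 * K) * z.1) * (D z.1 z.2 * w (δ • z.2)))
  have hF : Continuous fun y : ℝ × ℝ × E => F y.1 y.2 := by
    refine ENNReal.continuous_ofReal.comp (Continuous.mul (by fun_prop)
      ((hD.continuous.comp continuous_snd).mul (hw.continuous.comp (by fun_prop))))
  have hFδ (n : ℕ) : Measurable (F (δ n)) := (hF.comp (Continuous.prodMk_right _)).measurable
  have hlim (z : ℝ × E) : Tendsto (fun n => F (δ n) z) atTop (𝓝 (ENNReal.ofReal (D z.1 z.2))) := by
    simpa [F, hw.zero_eq_one, Function.comp_def] using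
      ((hF.comp (Continuous.prodMk_left z)).tendsto 0).comp hδlim
  have hmeas : Measurable fun z : ℝ × E => ENNReal.ofReal (D z.1 z.2) :=
    (ENNReal.continuous_ofReal.comp hD.continuous).measurable
  set ν := (volume.restrict (Ioc 0 T)).prod (volume : Measure E)
  have hbound (n : ℕ) : ∫⁻ z, F (δ n) z ∂ν ≤ ENNReal.ofReal M := by
    rw [lintegral_prod _ (hFδ n).aemeasurable, hD.lintegral_weighted_eq h0 (hw.scale (hδ n)) hT]
    exact ENNReal.ofReal_le_ofReal (h _ (hδ n))
  calc _ = ∫⁻ z, ENNReal.ofReal (D z.1 z.2) ∂ν := (lintegral_prod _ hmeas.aemeasurable).symm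
    _ = ∫⁻ z, liminf (fun n => F (δ n) z) atTop ∂ν :=
        lintegral_congr fun z => (hlim z).liminf_eq.symm
    _ ≤ liminf (fun n => ∫⁻ z, F (δ n) z ∂ν) atTop := lintegral_liminf_le hFδ
    _ ≤ ENNReal.ofReal M := liminf_le_of_le (by isBoundedDefault) fun b hb => by
        obtain ⟨n, hn⟩ := hb.exists
        exact hn.trans (hbound n)

end Weights

/-! ### The heat semigroup -/

section HeatFlow

open SchwartzMap FourierTransform LineDeriv Laplacian Filter Topology
open scoped Real

lemma hasTemperateGrowth_exp_comp {E : Type*} [NormedAddCommGroup E] [NormedSpace ℝ E]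
    {φ : E → ℝ} (hφ : φ.HasTemperateGrowth) (h0 : ∀ ξ, φ ξ ≤ 0) :
    (fun ξ => Real.exp (φ ξ)).HasTemperateGrowth := by
  have ht : range φ ⊆ Iio 1 := by
    rintro - ⟨ξ, rfl⟩
    exact (h0 ξ).trans_lt one_pos
  refine Function.HasTemperateGrowth.comp' (g := Real.exp) ht isOpen_Iio.uniqueDiffOn
    Real.contDiff_exp.contDiffOn (fun N => ⟨0, Real.exp 1, (Real.exp_pos 1).le, ?_⟩) hφ
  intro n _ y hy
  rw [iteratedFDerivWithin_of_isOpen n isOpen_Iio hy, norm_iteratedFDeriv_eq_norm_iteratedDeriv,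
    iteratedDeriv_eq_iterate, Real.iter_deriv_exp, Real.norm_eq_abs, Real.abs_exp]
  simpa using (show y < 1 from hy).le

variable {E : Type*} [NormedAddCommGroup E]

/-- The Fourier symbol `exp (-4π²t‖ξ‖²)` of the heat semigroup; the absolute value of the time
keeps it bounded by one for all real times. -/
def heatSymbol (t : ℝ) (ξ : E) : ℝ := Real.exp (-(4 * π ^ 2 * |t|) * ‖ξ‖ ^ 2)

lemma heatSymbol_exponent_nonpos (t : ℝ) (ξ : E) : -(4 * π ^ 2 * |t|) * ‖ξ‖ ^ 2 ≤ 0 :=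
  mul_nonpos_of_nonpos_of_nonneg (neg_nonpos.2 (by positivity)) (by positivity)

lemma heatSymbol_pos (t : ℝ) (ξ : E) : 0 < heatSymbol t ξ := Real.exp_pos _

lemma heatSymbol_le_one (t : ℝ) (ξ : E) : heatSymbol t ξ ≤ 1 :=
  Real.exp_le_one_iff.2 (heatSymbol_exponent_nonpos t ξ)

lemma continuous_heatSymbol : Continuous fun z : ℝ × E => heatSymbol z.1 z.2 := by
  unfold heatSymbol
  fun_prop

lemma hasDerivAt_heatSymbol {t : ℝ} (ht : 0 < t) (ξ : E) :
    HasDerivAt (fun s => heatSymbol s ξ) (heatSymbol t ξ * (-(4 * π ^ 2) * ‖ξ‖ ^ 2)) t := by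
  have hexp : HasDerivAt (fun s => Real.exp (-(4 * π ^ 2 * s) * ‖ξ‖ ^ 2))
      (Real.exp (-(4 * π ^ 2 * t) * ‖ξ‖ ^ 2) * (-(4 * π ^ 2 * 1) * ‖ξ‖ ^ 2)) t :=
    ((((hasDerivAt_id t).const_mul (4 * π ^ 2)).neg).mul_const (‖ξ‖ ^ 2)).exp
  have heq : (fun s => heatSymbol s ξ) =ᶠ[𝓝 t]
      fun s => Real.exp (-(4 * π ^ 2 * s) * ‖ξ‖ ^ 2) := by
    filter_upwards [Ioi_mem_nhds ht] with s hs
    rw [heatSymbol, abs_of_pos hs]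
  refine (hexp.congr_of_eventuallyEq heq).congr_deriv ?_
  rw [heq.eq_of_nhds, mul_one]

lemma hasLineDerivAt_lineDerivOp {F : Type*} [NormedAddCommGroup F] [NormedSpace ℝ F]
    {f : 𝓢(F, ℂ)} (x v : F) : HasLineDerivAt ℝ f (∂_{v} f x) x v := by
  rw [SchwartzMap.lineDerivOp_apply]
  exact f.differentiableAt.lineDifferentiableAt.hasLineDerivAt

variable [InnerProductSpace ℝ E]

@[fun_prop]
lemma hasTemperateGrowth_heatSymbol (t : ℝ) : (heatSymbol t : E → ℝ).HasTemperateGrowth :=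
  hasTemperateGrowth_exp_comp (by fun_prop) (heatSymbol_exponent_nonpos t)

variable [FiniteDimensional ℝ E] [MeasurableSpace E] [BorelSpace E] (f : 𝓢(E, ℂ))

lemma fourierMultiplierCLM_eq_integral {g : E → ℝ} (hg : g.HasTemperateGrowth) (x : E) :
    fourierMultiplierCLM ℂ g f x
      = ∫ ξ, Complex.exp (↑(2 * π * inner ℝ ξ x) * Complex.I) * (g ξ * 𝓕 f ξ) := by
  rw [fourierMultiplierCLM_apply, fourierInv_coe, Real.fourierInv_eq']
  simp [smulLeftCLM_apply_apply hg]

lemma lineDerivOp_fourierMultiplierCLM {g : E → ℝ} (hg : g.HasTemperateGrowth) (v : E) :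
    ∂_{v} (fourierMultiplierCLM ℂ g f) = fourierMultiplierCLM ℂ g (∂_{v} f) := by
  have hv : (fun x : E => inner ℝ x v).HasTemperateGrowth := by fun_prop
  rw [lineDeriv_eq_fourierMultiplierCLM, lineDeriv_eq_fourierMultiplierCLM,
    ← fourierMultiplierCLM_ofReal ℂ hg, ← fourierMultiplierCLM_ofReal ℂ hg, map_smul,
    fourierMultiplierCLM_ofReal ℂ hg, fourierMultiplierCLM_ofReal ℂ hg,
    fourierMultiplierCLM_fourierMultiplierCLM_apply hv hg,
    fourierMultiplierCLM_fourierMultiplierCLM_apply hg hv, mul_comm g]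

lemma fourier_laplacian_apply (ξ : E) : 𝓕 (Δ f) ξ = -(4 * π ^ 2) * ‖ξ‖ ^ 2 * 𝓕 f ξ := by
  rw [laplacian_eq_fourierMultiplierCLM, fourierMultiplierCLM_apply, FourierTransform.fourier_smul,
    FourierTransform.fourier_fourierInv_eq, smul_apply,
    smulLeftCLM_apply_apply (Function.hasTemperateGrowth_norm_sq E)]
  simp only [Complex.real_smul, Complex.ofReal_pow, neg_smul, Complex.ofReal_mul,
    Complex.ofReal_ofNat, neg_mul, neg_inj]
  ring

/-- The heat semigroup on Schwartz functions. -/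
def heat (t : ℝ) : 𝓢(E, ℂ) := fourierMultiplierCLM ℂ (heatSymbol t) f

lemma heat_zero : heat f 0 = f := by
  have : (heatSymbol 0 : E → ℝ) = fun _ => 1 := by ext ξ; simp [heatSymbol]
  simp [heat, this]

lemma hasLineDerivAt_heat (t : ℝ) (x v : E) :
    HasLineDerivAt ℝ (heat f t) (heat (∂_{v} f) t x) x v := by
  rw [heat, heat, ← lineDerivOp_fourierMultiplierCLM f (by fun_prop)]
  exact hasLineDerivAt_lineDerivOp x v

/-- The integrand of the Fourier inversion formula for `heat f t x`. -/
def heatIntegrand (t : ℝ) (x ξ : E) : ℂ :=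
  Complex.exp (↑(2 * π * inner ℝ ξ x) * Complex.I) * (heatSymbol t ξ * 𝓕 f ξ)

lemma heat_eq_integral (t : ℝ) (x : E) : heat f t x = ∫ ξ, heatIntegrand f t x ξ :=
  fourierMultiplierCLM_eq_integral f (by fun_prop) x

lemma continuous_heatIntegrand :
    Continuous fun y : ℝ × E × E => heatIntegrand f y.1 y.2.1 y.2.2 := by
  have hf : Continuous ⇑(𝓕 f : 𝓢(E, ℂ)) := (𝓕 f).continuous
  have := continuous_heatSymbol (E := E)
  unfold heatIntegrand
  fun_prop

lemma aestronglyMeasurable_heatIntegrand (t : ℝ) (x : E) :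
    AEStronglyMeasurable (heatIntegrand f t x) :=
  Continuous.aestronglyMeasurable ((continuous_heatIntegrand f).comp
    ((Continuous.prodMk_right t).comp (Continuous.prodMk_right x)))

lemma norm_heatIntegrand_le (t : ℝ) (x ξ : E) : ‖heatIntegrand f t x ξ‖ ≤ ‖𝓕 f ξ‖ := by
  rw [heatIntegrand, norm_mul, Complex.norm_exp_ofReal_mul_I, one_mul, norm_mul]
  refine mul_le_of_le_one_left (norm_nonneg _) ?_
  simpa [abs_of_pos (heatSymbol_pos t ξ)] using heatSymbol_le_one t ξ

lemma integrable_norm_fourier : Integrable fun ξ => ‖𝓕 f ξ‖ := (𝓕 f).integrable.norm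

lemma bddCont_heat : BddCont fun t x => heat f t x := by
  simp_rw [heat_eq_integral]
  refine ⟨continuous_of_dominated (fun z => aestronglyMeasurable_heatIntegrand f z.1 z.2)
    (fun z => Eventually.of_forall (norm_heatIntegrand_le f z.1 z.2))
    (integrable_norm_fourier f) (Eventually.of_forall fun ξ =>
      (continuous_heatIntegrand f).comp (by fun_prop : Continuous fun z : ℝ × E => (z.1, z.2, ξ))),
    ∫ ξ, ‖𝓕 f ξ‖, fun t x => norm_integral_le_of_norm_le (integrable_norm_fourier f)
      (Eventually.of_forall (norm_heatIntegrand_le f t x))⟩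

lemma hasDerivAt_heat {t : ℝ} (ht : 0 < t) (x : E) :
    HasDerivAt (fun s => heat f s x) (heat (Δ f) t x) t := by
  simp_rw [heat_eq_integral]
  refine (hasDerivAt_integral_of_dominated_loc_of_deriv_le (bound := fun ξ => ‖𝓕 (Δ f) ξ‖)
    (F' := fun s => heatIntegrand (Δ f) s x) (Ioi_mem_nhds ht)
    (Eventually.of_forall fun s => aestronglyMeasurable_heatIntegrand f s x)
    ((integrable_norm_fourier f).mono' (aestronglyMeasurable_heatIntegrand f t x)
      (Eventually.of_forall (norm_heatIntegrand_le f t x)))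
    (aestronglyMeasurable_heatIntegrand (Δ f) t x)
    (Eventually.of_forall fun ξ s _ => norm_heatIntegrand_le (Δ f) s x ξ)
    (integrable_norm_fourier (Δ f)) (Eventually.of_forall fun ξ s hs => ?_)).2
  refine (((hasDerivAt_heatSymbol hs ξ).ofReal_comp.mul_const (𝓕 f ξ)).const_mul _).congr_deriv ?_
  rw [heatIntegrand, fourier_laplacian_apply]
  push_cast
  ring

lemma bddJet_heat {ι : Type*} [Fintype ι] (e : OrthonormalBasis ι ℝ E) :
    BddJet e (fun t x => heat f t x) (fun t x => ∑ i, heat (∂_{e i} (∂_{e i} f)) t x)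
      (fun i t x => heat (∂_{e i} f) t x) (fun i t x => heat (∂_{e i} (∂_{e i} f)) t x) where
  zeroth := bddCont_heat f
  time := .sum fun i => bddCont_heat _
  first _ := bddCont_heat _
  second _ := bddCont_heat _
  hasDerivAt_time t x ht := by
    have : ∑ i, heat (∂_{e i} (∂_{e i} f)) t x = heat (Δ f) t x := by
      simp [SchwartzMap.laplacian_eq_sum e, heat, map_sum]
    rw [this]
    exact hasDerivAt_heat f ht x
  hasLineDerivAt_zeroth _ _ _ := hasLineDerivAt_heat f _ _ _
  hasLineDerivAt_first _ _ _ := hasLineDerivAt_heat _ _ _ _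

end HeatFlow

section BilinearEnergy

open SchwartzMap LineDeriv Filter Topology

section Regularization

variable {X V : Type*} [TopologicalSpace X] [MeasurableSpace X] [OpensMeasurableSpace X]
  [NormedAddCommGroup V] {μ : Measure X} {f : X → V} {w : X → ℝ} {C a : ℝ}

lemma integrable_rpow_norm_sq_add_sq_mul (hf : Continuous f) (hC : ∀ x, ‖f x‖ ≤ C)
    (hw : Integrable w μ) (ha : 0 ≤ a) (η : ℝ) :
    Integrable (fun x => (‖f x‖ ^ 2 + η ^ 2) ^ a * w x) μ :=
  hw.bdd_mul (c := (C ^ 2 + η ^ 2) ^ a)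
    (Continuous.rpow_const (by fun_prop) fun _ => Or.inr ha).aestronglyMeasurable
    (Eventually.of_forall fun x => by
      have := hC x
      rw [Real.norm_of_nonneg (by positivity)]
      gcongr)

lemma tendsto_integral_rpow_norm_sq_add_sq_mul (hf : Continuous f) (hC : ∀ x, ‖f x‖ ≤ C)
    (hw : Integrable w μ) (ha : 0 ≤ a) :
    Tendsto (fun η : ℝ => ∫ x, (‖f x‖ ^ 2 + η ^ 2) ^ a * w x ∂μ) (𝓝 0)
      (𝓝 (∫ x, ‖f x‖ ^ (2 * a) * w x ∂μ)) := by
  have hcont (x : X) : Continuous fun η : ℝ => (‖f x‖ ^ 2 + η ^ 2) ^ a :=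
    Continuous.rpow_const (by fun_prop) fun _ => Or.inr ha
  refine tendsto_integral_filter_of_dominated_convergence (fun x => (C ^ 2 + 1) ^ a * ‖w x‖)
    (Eventually.of_forall fun η => ?_) ?_ (hw.norm.const_mul _) (Eventually.of_forall fun x => ?_)
  · exact (integrable_rpow_norm_sq_add_sq_mul hf hC hw ha η).aestronglyMeasurable
  · filter_upwards [Metric.closedBall_mem_nhds (0 : ℝ) one_pos] with η hη
    refine Eventually.of_forall fun x => ?_
    rw [mem_closedBall_zero_iff, Real.norm_eq_abs, ← sq_le_one_iff_abs_le_one] at hη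
    rw [norm_mul, Real.norm_of_nonneg (by positivity)]
    have := hC x
    gcongr
  · have hpow : ‖f x‖ ^ (2 * a) = (‖f x‖ ^ 2 + 0 ^ 2) ^ a := by
      rw [Real.rpow_mul (norm_nonneg _), Real.rpow_two, zero_pow two_ne_zero, add_zero]
    rw [hpow]
    exact ((hcont x).tendsto 0).mul_const (w x)

end Regularization

variable {E : Type*} [NormedAddCommGroup E] [InnerProductSpace ℝ E] [FiniteDimensional ℝ E]
  [MeasurableSpace E] [BorelSpace E]

lemma integrable_norm_rpow (f : 𝓢(E, ℂ)) {p : ℝ} (hp : 0 < p) : Integrable fun x => ‖f x‖ ^ p := by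
  simpa [ENNReal.toReal_ofReal hp.le] using (f.memLp (ENNReal.ofReal p)).integrable_norm_rpow
    (by simpa using hp) ENNReal.ofReal_ne_top

variable {ι : Type*} [Fintype ι] {e : OrthonormalBasis ι ℝ E} {a b m d : ℝ}
  {w : E → ℝ} {w1 w2 : ι → E → ℝ} {K : ℝ}

namespace BellmanParams

variable (h : BellmanParams a b m d)
include h

lemma heat_energy_le_integral_regBellman (hw : HeatWeight e w w1 w2 K) (f g : 𝓢(E, ℂ)) (j k : ι)
    {η : ℝ} (hη : 0 < η) {T : ℝ} (hT : 0 ≤ T) :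
    ∫ t in (0 : ℝ)..T, Real.exp (-K * t)
        * ∫ x, (8 * d * (‖heat (∂_{e j} f) t x‖ * ‖heat (∂_{e k} g) t x‖)) * w x
      ≤ ∫ x, regBellman a b m d η (f x, g x) * w x := by
  have hjet := ((bddJet_heat f e).prodMk (bddJet_heat g e)).comp
    ((contDiff_regBellman a b m d hη).of_le (by exact_mod_cast ENat.LEInfty.out))
  have hD := BddCont.comp (Ψ := fun z : ℂ × ℂ => 8 * d * (‖z.1‖ * ‖z.2‖)) (by fun_prop)
    ((bddCont_heat (∂_{e j} f)).prodMk (bddCont_heat (∂_{e k} g)))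
  have henergy := hjet.energy_le (fun t x => h.bellman_nonneg (by positivity) (by positivity)) hD
    (fun t x => ?_) hw hT
  · simpa only [heat_zero] using henergy
  · have hlaplacian : (∑ i, heat (∂_{e i} (∂_{e i} f)) t x, ∑ i, heat (∂_{e i} (∂_{e i} g)) t x)
        = ∑ i, (heat (∂_{e i} (∂_{e i} f)) t x, heat (∂_{e i} (∂_{e i} g)) t x) := by
      rw [Prod.ext_iff, Prod.fst_sum, Prod.snd_sum]
      exact ⟨rfl, rfl⟩
    rw [hlaplacian, map_sum, Finset.sum_add_distrib, add_comm]
    gcongr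
    exact h.le_sum_hessian_regBellman hη _
      (fun i => (heat (∂_{e i} f) t x, heat (∂_{e i} g) t x)) j k

lemma heat_energy_le (hw : HeatWeight e w w1 w2 K) (f g : 𝓢(E, ℂ)) (j k : ι) {T : ℝ}
    (hT : 0 ≤ T) :
    ∫ t in (0 : ℝ)..T, Real.exp (-K * t)
        * ∫ x, (8 * d * (‖heat (∂_{e j} f) t x‖ * ‖heat (∂_{e k} g) t x‖)) * w x
      ≤ (1 + d) * ((∫ x, ‖f x‖ ^ (2 * a)) + ∫ x, ‖g x‖ ^ (2 * b)) := by
  have hd := h.d_pos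
  have ha : 0 < a := one_pos.trans_le h.one_le_a
  have hb : 0 < b := one_half_pos.trans h.half_lt_b
  have hpow (φ : 𝓢(E, ℂ)) {c : ℝ} (hc : 0 < c) (η : ℝ) := integrable_rpow_norm_sq_add_sq_mul
    φ.continuous (φ.norm_le_seminorm ℝ) hw.integrable hc.le η
  have hlim (φ : 𝓢(E, ℂ)) {c : ℝ} (hc : 0 < c) := (tendsto_integral_rpow_norm_sq_add_sq_mul
    φ.continuous (φ.norm_le_seminorm ℝ) hw.integrable hc.le).mono_left
      (nhdsWithin_le_nhds (s := Ioi 0))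
  have hle (φ : 𝓢(E, ℂ)) {c : ℝ} (hc : 0 < c) :
      ∫ x, ‖φ x‖ ^ (2 * c) * w x ≤ ∫ x, ‖φ x‖ ^ (2 * c) := by
    refine integral_mono_of_nonneg (Eventually.of_forall fun x =>
      mul_nonneg (by positivity) (hw.nonneg x)) (integrable_norm_rpow φ (by positivity))
      (Eventually.of_forall fun x => mul_le_of_le_one_right (by positivity) (hw.le_one x))
  refine (ge_of_tendsto (((hlim f ha).add (hlim g hb)).const_mul (1 + d))
    (eventually_nhdsWithin_of_forall fun η hη => ?_)).trans
    (mul_le_mul_of_nonneg_left (add_le_add (hle f ha) (hle g hb)) (by positivity))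
  refine (h.heat_energy_le_integral_regBellman hw f g j k hη hT).trans ?_
  have hη2 : 0 < η ^ 2 := sq_pos_of_pos hη
  rw [← integral_add (hpow f ha η) (hpow g hb η), ← integral_const_mul]
  refine integral_mono_of_nonneg (Eventually.of_forall fun x => mul_nonneg
    (h.bellman_nonneg (by positivity) (by positivity)) (hw.nonneg x))
    (((hpow f ha η).add (hpow g hb η)).const_mul _) (Eventually.of_forall fun x => ?_)
  beta_reduce
  rw [← add_mul, ← mul_assoc]
  exact mul_le_mul_of_nonneg_right (h.bellman_le (by positivity) (by positivity)) (hw.nonneg x)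

lemma lintegral_heat_mul_heat_le (e : OrthonormalBasis ι ℝ E) (f g : 𝓢(E, ℂ)) (j k : ι) :
    ∫⁻ t in Ioi (0 : ℝ), ∫⁻ x, ‖heat (∂_{e j} f) t x‖ₑ * ‖heat (∂_{e k} g) t x‖ₑ
      ≤ ENNReal.ofReal ((8 * d)⁻¹ * (1 + d) * ((∫ x, ‖f x‖ ^ (2 * a)) + ∫ x, ‖g x‖ ^ (2 * b))) := by
  have hd := h.d_pos
  obtain ⟨w, w1, w2, K, hw⟩ := exists_heatWeight (e := e) fun i => e.norm_eq_one i
  have hD := BddCont.comp (Ψ := fun z : ℂ × ℂ => ‖z.1‖ * ‖z.2‖) (by fun_prop)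
    ((bddCont_heat (∂_{e j} f)).prodMk (bddCont_heat (∂_{e k} g)))
  simp_rw [← ofReal_norm, ← ENNReal.ofReal_mul (norm_nonneg _)]
  refine hD.lintegral_Ioi_le_of_forall_Ioc fun T hT =>
    hD.lintegral_Ioc_le_of_forall_weighted (fun t x => by positivity) hw hT fun δ hδ => ?_
  have henergy := h.heat_energy_le (hw.scale hδ) f g j k hT
  simp_rw [mul_assoc (8 * d), integral_const_mul, mul_left_comm _ (8 * d)] at henergy
  rw [intervalIntegral.integral_const_mul] at henergy
  rwa [mul_assoc, le_inv_mul_iff₀ (by positivity)]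

end BellmanParams

end BilinearEnergy

/-! ### The resolvent of the Laplacian and its Riesz transforms -/

section Resolvent

open SchwartzMap FourierTransform LineDeriv Filter
open scoped Real

/-- The Fourier symbol of the resolvent `(ε - Δ)⁻¹` of the Laplacian. -/
def resSymbol {E : Type*} [NormedAddCommGroup E] (ε : ℝ) (ξ : E) : ℝ :=
  (ε + 4 * π ^ 2 * ‖ξ‖ ^ 2)⁻¹

variable {E : Type*} [NormedAddCommGroup E] {ε : ℝ}

lemma heatSymbol_mul_heatSymbol {s t : ℝ} (hs : 0 ≤ s) (ht : 0 ≤ t) (ξ : E) :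
    heatSymbol t ξ * heatSymbol s ξ = heatSymbol (s + t) ξ := by
  simp only [heatSymbol, ← Real.exp_add, abs_of_nonneg hs, abs_of_nonneg ht,
    abs_of_nonneg (add_nonneg hs ht)]
  ring_nf

lemma integral_exp_mul_heatSymbol (hε : 0 < ε) (ξ : E) :
    ∫ t in Ioi (0 : ℝ), Real.exp (-(2 * ε) * t) * heatSymbol (t + t) ξ = resSymbol ε ξ / 2 := by
  have hpos : 0 < ε + 4 * π ^ 2 * ‖ξ‖ ^ 2 := by positivity
  have hexp := integral_exp_mul_Ioi (a := -(2 * (ε + 4 * π ^ 2 * ‖ξ‖ ^ 2))) (by linarith) 0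
  rw [mul_zero, Real.exp_zero] at hexp
  calc ∫ t in Ioi (0 : ℝ), Real.exp (-(2 * ε) * t) * heatSymbol (t + t) ξ
      = ∫ t in Ioi (0 : ℝ), Real.exp (-(2 * (ε + 4 * π ^ 2 * ‖ξ‖ ^ 2)) * t) := by
        refine setIntegral_congr_fun measurableSet_Ioi fun t ht => ?_
        simp only [heatSymbol, ← Real.exp_add, abs_of_pos (add_pos (mem_Ioi.1 ht) ht)]
        ring_nf
    _ = resSymbol ε ξ / 2 := by
        rw [hexp, resSymbol]
        field_simp

variable [InnerProductSpace ℝ E]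

lemma hasTemperateGrowth_resSymbol (hε : 0 < ε) :
    (resSymbol ε : E → ℝ).HasTemperateGrowth := by
  have hscale : (resSymbol ε : E → ℝ)
      = fun ξ => ε⁻¹ * (1 + ‖(2 * π / √ε) • ξ‖ ^ 2) ^ (-1 : ℝ) := by
    ext ξ
    rw [Real.rpow_neg_one, ← mul_inv, norm_smul, mul_pow, Real.norm_eq_abs, sq_abs, div_pow,
      Real.sq_sqrt hε.le, resSymbol]
    congr 1
    field_simp
    ring
  rw [hscale]
  exact Function.HasTemperateGrowth.mul (by fun_prop)
    ((Function.hasTemperateGrowth_one_add_norm_sq_rpow E (-1)).comp (by fun_prop))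

variable [FiniteDimensional ℝ E] [MeasurableSpace E] [BorelSpace E] (f g : 𝓢(E, ℂ))

/-- The resolvent `(ε - Δ)⁻¹` on Schwartz functions. -/
def res (ε : ℝ) : 𝓢(E, ℂ) := fourierMultiplierCLM ℂ (resSymbol ε) f

lemma fourierInv_eq_fourier_neg (ξ : E) : 𝓕⁻ f ξ = 𝓕 f (-ξ) := by
  rw [SchwartzMap.fourierInv_coe, SchwartzMap.fourier_coe, Real.fourierInv_eq_fourier_neg]

lemma integral_fourierMultiplierCLM_mul {σ : E → ℝ} (hσ : σ.HasTemperateGrowth) :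
    ∫ x, fourierMultiplierCLM ℂ σ f x * g x = ∫ ξ, σ ξ * (𝓕 f ξ * 𝓕 g (-ξ)) := by
  rw [fourierMultiplierCLM_apply, SchwartzMap.integral_fourierInv_mul_eq]
  refine integral_congr_ae (Eventually.of_forall fun ξ => ?_)
  simp only [smulLeftCLM_apply_apply hσ, fourierInv_eq_fourier_neg, Complex.real_smul, mul_assoc]

lemma integral_fourierMultiplierCLM_mul_comm {σ : E → ℝ} (hσ : σ.HasTemperateGrowth)
    (heven : ∀ ξ, σ (-ξ) = σ ξ) :
    ∫ x, fourierMultiplierCLM ℂ σ f x * g x = ∫ x, f x * fourierMultiplierCLM ℂ σ g x := by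
  simp_rw [mul_comm (f _)]
  rw [integral_fourierMultiplierCLM_mul _ _ hσ, integral_fourierMultiplierCLM_mul _ _ hσ,
    ← integral_neg_eq_self]
  refine integral_congr_ae (Eventually.of_forall fun ξ => ?_)
  simp only [heven, neg_neg]
  ring

lemma heat_heat {s t : ℝ} (hs : 0 ≤ s) (ht : 0 ≤ t) : heat (heat f s) t = heat f (s + t) := by
  rw [heat, heat, heat, fourierMultiplierCLM_fourierMultiplierCLM_apply (by fun_prop) (by fun_prop)]
  congr 2
  exact funext fun ξ => heatSymbol_mul_heatSymbol hs ht ξ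

lemma integral_heat_lineDerivOp_mul (v w : E) {t : ℝ} (ht : 0 ≤ t) :
    ∫ x, heat (∂_{w} (∂_{v} f)) (t + t) x * g x
      = -∫ x, heat (∂_{v} f) t x * heat (∂_{w} g) t x := by
  have hsymm := integral_fourierMultiplierCLM_mul_comm (heat (∂_{v} f) t) (∂_{w} g)
    (σ := heatSymbol t) (by fun_prop) (fun ξ => by simp [heatSymbol])
  rw [← heat, heat_heat _ ht ht, SchwartzMap.integral_mul_lineDerivOp_right_eq_neg_left, heat,
    lineDerivOp_fourierMultiplierCLM _ (by fun_prop)] at hsymm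
  exact neg_eq_iff_eq_neg.1 hsymm

lemma integrable_exp_mul_heatSymbol_mul (hε : 0 < ε) :
    Integrable (Function.uncurry fun (t : ℝ) (ξ : E) =>
      (Real.exp (-(2 * ε) * t) * heatSymbol (t + t) ξ : ℝ) * (𝓕 f ξ * 𝓕 g (-ξ)))
      ((volume.restrict (Ioi (0 : ℝ))).prod volume) := by
  have hfg : Integrable fun ξ => 𝓕 f ξ * 𝓕 g (-ξ) := by
    simp_rw [← fourierInv_eq_fourier_neg]
    exact (𝓕⁻ g).integrable.bdd_mul (𝓕 f).continuous.aestronglyMeasurable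
      (Eventually.of_forall ((𝓕 f).norm_le_seminorm ℝ))
  have hexp : IntegrableOn (fun t : ℝ => (Real.exp (-(2 * ε) * t) : ℂ)) (Ioi 0) :=
    (integrableOn_exp_mul_Ioi (by linarith) 0).ofReal
  have hsymbol : Continuous fun z : ℝ × E => (heatSymbol (z.1 + z.1) z.2 : ℂ) :=
    Complex.continuous_ofReal.comp (continuous_heatSymbol.comp
      (by fun_prop : Continuous fun z : ℝ × E => (z.1 + z.1, z.2)))
  refine ((hexp.mul_prod hfg).bdd_mul (c := 1) hsymbol.aestronglyMeasurable
    (Eventually.of_forall fun z => ?_)).congr (Eventually.of_forall fun z => ?_)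
  · simpa [abs_of_pos (heatSymbol_pos _ _)] using heatSymbol_le_one (z.1 + z.1) z.2
  · simp only [Function.uncurry]
    push_cast
    ring

lemma integral_res_mul (hε : 0 < ε) :
    ∫ x, res f ε x * g x
      = 2 * ∫ t in Ioi (0 : ℝ), (Real.exp (-(2 * ε) * t) : ℂ) * ∫ x, heat f (t + t) x * g x := by
  have htime (t : ℝ) : (Real.exp (-(2 * ε) * t) : ℂ) * ∫ x, heat f (t + t) x * g x
      = ∫ ξ, (Real.exp (-(2 * ε) * t) * heatSymbol (t + t) ξ : ℝ) * (𝓕 f ξ * 𝓕 g (-ξ)) := by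
    rw [heat, integral_fourierMultiplierCLM_mul _ _ (by fun_prop), ← integral_const_mul]
    push_cast
    simp_rw [mul_assoc]
  simp_rw [htime]
  rw [integral_integral_swap (integrable_exp_mul_heatSymbol_mul f g hε), res,
    integral_fourierMultiplierCLM_mul _ _ (hasTemperateGrowth_resSymbol hε), ← integral_const_mul]
  refine integral_congr_ae (Eventually.of_forall fun ξ => ?_)
  beta_reduce
  rw [integral_mul_const, integral_complex_ofReal, integral_exp_mul_heatSymbol hε]
  push_cast
  ring

lemma lineDerivOp_res (hε : 0 < ε) (v : E) : ∂_{v} (res f ε) = res (∂_{v} f) ε :=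
  lineDerivOp_fourierMultiplierCLM f (hasTemperateGrowth_resSymbol hε) v

lemma enorm_integral_lineDerivOp_res_mul_le (hε : 0 < ε) (v w : E) :
    ‖∫ x, ∂_{w} (∂_{v} (res f ε)) x * g x‖ₑ
      ≤ 2 * ∫⁻ t in Ioi (0 : ℝ), ∫⁻ x, ‖heat (∂_{v} f) t x‖ₑ * ‖heat (∂_{w} g) t x‖ₑ := by
  rw [lineDerivOp_res f hε, lineDerivOp_res _ hε, integral_res_mul _ _ hε, enorm_mul,
    show ‖(2 : ℂ)‖ₑ = 2 by rw [← ofReal_norm]; simp]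
  gcongr
  refine (enorm_integral_le_lintegral_enorm _).trans
    (setLIntegral_mono' measurableSet_Ioi fun t ht => ?_)
  have hexp : ‖(Real.exp (-(2 * ε) * t) : ℂ)‖ₑ ≤ 1 := by
    rw [← ofReal_norm, Complex.norm_real, Real.norm_eq_abs, Real.abs_exp]
    exact ENNReal.ofReal_le_one.2 (Real.exp_le_one_iff.2 (by nlinarith [mem_Ioi.1 ht]))
  rw [integral_heat_lineDerivOp_mul f g v w (mem_Ioi.1 ht).le, enorm_mul, enorm_neg]
  refine (mul_le_of_le_one_left' hexp).trans ((enorm_integral_le_lintegral_enorm _).trans_eq ?_)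
  simp only [enorm_mul]

end Resolvent

section Duality

open SchwartzMap LineDeriv Filter

/-- The Hölder dual `conj z * |z| ^ (p - 2)` of a complex number: it maps `L^p` to `L^q` and its
pairing with `z` is `|z| ^ p`. -/
def holderDual (p : ℝ) (z : ℂ) : ℂ := starRingEnd ℂ z * (‖z‖ ^ (p - 2) : ℝ)

variable {p q : ℝ}

lemma mul_holderDual (hp : 0 < p) (z : ℂ) : z * holderDual p z = (‖z‖ ^ p : ℝ) := by
  rw [holderDual, ← mul_assoc, Complex.mul_conj, Complex.normSq_eq_norm_sq, ← Complex.ofReal_mul]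
  rcases (norm_nonneg z).eq_or_lt with h0 | h0
  · simp [← h0, Real.zero_rpow hp.ne']
  · rw [← Real.rpow_natCast, ← Real.rpow_add h0, Nat.cast_two, add_sub_cancel]

lemma norm_holderDual_rpow (hpq : p.HolderConjugate q) (z : ℂ) :
    ‖holderDual p z‖ ^ q = ‖z‖ ^ p := by
  have hnorm : ‖holderDual p z‖ = ‖z‖ ^ (p - 1) := by
    have hp1 : 0 < p - 1 := hpq.sub_one_pos
    rw [holderDual, norm_mul, RCLike.norm_conj, Complex.norm_real,
      Real.norm_of_nonneg (by positivity)]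
    rcases (norm_nonneg z).eq_or_lt with h0 | h0
    · rw [← h0, zero_mul, Real.zero_rpow hp1.ne']
    · rw [← Real.rpow_one_add' h0.le (by linarith)]
      ring_nf
  rw [hnorm, ← Real.rpow_mul (norm_nonneg z), hpq.sub_one_mul_conj]

lemma measurable_holderDual (p : ℝ) : Measurable (holderDual p) := by
  unfold holderDual
  fun_prop

section Lp

variable {X : Type*} [MeasurableSpace X] {μ : Measure X}

lemma norm_toLp_rpow {F : Type*} [NormedAddCommGroup F] {g : X → F} (hq : 0 < q)
    (hg : MemLp g (ENNReal.ofReal q) μ) : ‖hg.toLp g‖ ^ q = ∫ x, ‖g x‖ ^ q ∂μ := by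
  have hnonneg : 0 ≤ ∫ x, ‖g x‖ ^ q ∂μ := integral_nonneg fun x => by positivity
  rw [Lp.norm_toLp, hg.eLpNorm_eq_integral_rpow_norm (by simpa using hq) (by simp),
    ENNReal.toReal_ofReal hq.le, ENNReal.toReal_ofReal (by positivity), ← Real.rpow_mul hnonneg,
    inv_mul_cancel₀ hq.ne', Real.rpow_one]

lemma memLp_holderDual (hpq : p.HolderConjugate q) {h : X → ℂ} (hm : AEStronglyMeasurable h μ)
    (hh : Integrable (fun x => ‖h x‖ ^ p) μ) :
    MemLp (fun x => holderDual p (h x)) (ENNReal.ofReal q) μ := by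
  have hq := hpq.symm.pos
  have hm' : AEStronglyMeasurable (fun x => holderDual p (h x)) μ :=
    ((measurable_holderDual p).comp_aemeasurable hm.aemeasurable).aestronglyMeasurable
  rw [← integrable_norm_rpow_iff hm' (by simpa using hq) (by simp), ENNReal.toReal_ofReal hq.le]
  simpa only [norm_holderDual_rpow hpq] using hh

end Lp

variable {E : Type*} [NormedAddCommGroup E] [InnerProductSpace ℝ E] [FiniteDimensional ℝ E]
  [MeasurableSpace E] [BorelSpace E] {K A : ℝ}

lemma norm_integral_mul_le_of_schwartz (hpq : p.HolderConjugate q) (h : 𝓢(E, ℂ))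
    (H : ∀ g : 𝓢(E, ℂ), ‖∫ x, h x * g x‖ ≤ K * (A + ∫ x, ‖g x‖ ^ q)) {g : E → ℂ}
    (hg : MemLp g (ENNReal.ofReal q)) : ‖∫ x, h x * g x‖ ≤ K * (A + ∫ x, ‖g x‖ ^ q) := by
  have hq := hpq.symm.pos
  have : ENNReal.HolderConjugate (ENNReal.ofReal p) (ENNReal.ofReal q) :=
    ⟨by simpa using hpq.inv_add_inv_ennreal⟩
  have : Fact (1 ≤ ENNReal.ofReal p) := ⟨by simpa using hpq.lt.le⟩
  have : Fact (1 ≤ ENNReal.ofReal q) := ⟨by simpa using hpq.symm.lt.le⟩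
  let Λ := (ContinuousLinearMap.mul ℂ ℂ).lpPairing volume (ENNReal.ofReal p) (ENNReal.ofReal q)
    (h.toLp (ENNReal.ofReal p))
  have hΛ {φ : E → ℂ} (hφ : MemLp φ (ENNReal.ofReal q)) : Λ (hφ.toLp φ) = ∫ x, h x * φ x := by
    refine (ContinuousLinearMap.lpPairing_eq_integral _ _ _).trans (integral_congr_ae ?_)
    filter_upwards [h.coeFn_toLp (ENNReal.ofReal p), hφ.coeFn_toLp] with x h1 h2
    rw [h1, h2, ContinuousLinearMap.mul_apply']
  have hbound (G : Lp ℂ (ENNReal.ofReal q) (volume : Measure E)) :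
      ‖Λ G‖ ≤ K * (A + ‖G‖ ^ q) := by
    have hcont : Continuous fun G : Lp ℂ (ENNReal.ofReal q) (volume : Measure E) =>
        K * (A + ‖G‖ ^ q) := continuous_const.mul (continuous_const.add
      (continuous_norm.rpow_const fun _ => Or.inr hq.le))
    refine isClosed_property (SchwartzMap.denseRange_toLpCLM (by simp))
      (isClosed_le Λ.continuous.norm hcont) (fun φ => ?_) G
    have hφ := H φ
    rw [← hΛ (φ.memLp _), ← norm_toLp_rpow hq (φ.memLp _ volume)] at hφ
    exact hφ
  rw [← hΛ hg, ← norm_toLp_rpow hq hg]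
  exact hbound _

/- Testing the pairing with `l • holderDual p h` gives `l N ≤ K (A + l ^ q N)` for `N = ∫ |h| ^ p`,
and the choice of `l` absorbs the last term. -/
lemma integral_norm_rpow_le_of_pairing (hpq : p.HolderConjugate q) (h : 𝓢(E, ℂ)) {l : ℝ}
    (hl : 0 < l) (hKl : 2 * K * l ^ (q - 1) = 1)
    (H : ∀ g : 𝓢(E, ℂ), ‖∫ x, h x * g x‖ ≤ K * (A + ∫ x, ‖g x‖ ^ q)) :
    ∫ x, ‖h x‖ ^ p ≤ 2 * K * l⁻¹ * A := by
  set N := ∫ x, ‖h x‖ ^ p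
  have hN : 0 ≤ N := integral_nonneg fun x => by positivity
  have hpair := norm_integral_mul_le_of_schwartz hpq h H ((memLp_holderDual hpq
    h.continuous.aestronglyMeasurable (integrable_norm_rpow h hpq.pos)).const_mul (l : ℂ))
  simp_rw [mul_left_comm _ (l : ℂ), mul_holderDual hpq.pos, norm_mul, Complex.norm_real,
    Real.norm_of_nonneg hl.le, Real.mul_rpow hl.le (norm_nonneg _), norm_holderDual_rpow hpq]
    at hpair
  rw [integral_const_mul, integral_const_mul, integral_complex_ofReal, norm_mul,
    Complex.norm_real, Complex.norm_real, Real.norm_of_nonneg hl.le, Real.norm_of_nonneg hN]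
    at hpair
  have hlq : 2 * K * l ^ q = l := by
    have : l ^ q = l * l ^ (q - 1) := by
      rw [← Real.rpow_one_add' hl.le (by linarith [hpq.symm.pos]), add_sub_cancel]
    rw [this]
    linear_combination l * hKl
  rw [mul_right_comm, mul_comm, ← div_eq_inv_mul, le_div_iff₀ hl]
  linear_combination 2 * hpair + N * hlq

variable {ι : Type*} [Fintype ι]

lemma exists_norm_integral_lineDerivOp_res_mul_le (hpq : p.HolderConjugate q)
    (e : OrthonormalBasis ι ℝ E) :
    ∃ K : ℝ, 0 < K ∧ ∀ ε : ℝ, 0 < ε → ∀ (j k : ι) (f g : 𝓢(E, ℂ)),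
      ‖∫ x, ∂_{e k} (∂_{e j} (res f ε)) x * g x‖
        ≤ K * ((∫ x, ‖f x‖ ^ p) + ∫ x, ‖g x‖ ^ q) := by
  suffices ∃ K : ℝ, 0 < K ∧ ∀ (j k : ι) (f g : 𝓢(E, ℂ)),
      ∫⁻ t in Ioi (0 : ℝ), ∫⁻ x, ‖heat (∂_{e j} f) t x‖ₑ * ‖heat (∂_{e k} g) t x‖ₑ
        ≤ ENNReal.ofReal (K * ((∫ x, ‖f x‖ ^ p) + ∫ x, ‖g x‖ ^ q)) by
    obtain ⟨K, hK, H⟩ := this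
    refine ⟨2 * K, by positivity, fun ε hε j k f g => ?_⟩
    have : 0 ≤ (∫ x, ‖f x‖ ^ p) + ∫ x, ‖g x‖ ^ q :=
      add_nonneg (integral_nonneg fun x => by positivity) (integral_nonneg fun x => by positivity)
    have hres := (enorm_integral_lineDerivOp_res_mul_le f g hε (e j) (e k)).trans
      (mul_le_mul_right (H j k f g) 2)
    rwa [← ofReal_norm, ← ENNReal.ofReal_ofNat, ← ENNReal.ofReal_mul zero_le_two,
      ENNReal.ofReal_le_ofReal_iff (by positivity), ← mul_assoc] at hres
  rcases le_total 2 p with hp | hp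
  · obtain ⟨m, d, h⟩ := exists_bellmanParams hp hpq
    have hd := h.d_pos
    refine ⟨(8 * d)⁻¹ * (1 + d), by positivity, fun j k f g => ?_⟩
    simpa only [mul_div_cancel₀ _ (two_ne_zero' ℝ)] using h.lintegral_heat_mul_heat_le e f g j k
  · have hq : 2 ≤ q := by nlinarith [hpq.lt, hpq.mul_eq_add]
    obtain ⟨m, d, h⟩ := exists_bellmanParams hq hpq.symm
    have hd := h.d_pos
    refine ⟨(8 * d)⁻¹ * (1 + d), by positivity, fun j k f g => ?_⟩
    rw [add_comm (∫ x, ‖f x‖ ^ p)]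
    simp_rw [mul_comm ‖heat (∂_{e j} f) _ _‖ₑ]
    simpa only [mul_div_cancel₀ _ (two_ne_zero' ℝ)] using h.lintegral_heat_mul_heat_le e g f k j

theorem exists_eLpNorm_lineDerivOp_res_le (hp : 1 < p) (e : OrthonormalBasis ι ℝ E) :
    ∃ C : ℝ, 0 < C ∧ ∀ ε : ℝ, 0 < ε → ∀ (j k : ι) (f : 𝓢(E, ℂ)),
      eLpNorm (∂_{e k} (∂_{e j} (res f ε)) : 𝓢(E, ℂ)) (ENNReal.ofReal p) volume
        ≤ ENNReal.ofReal C * eLpNorm f (ENNReal.ofReal p) volume := by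
  have hpq := Real.HolderConjugate.conjExponent hp
  set q := p.conjExponent
  have hp0 := hpq.pos
  obtain ⟨K, hK, H⟩ := exists_norm_integral_lineDerivOp_res_mul_le hpq e
  set l : ℝ := (2 * K)⁻¹ ^ (q - 1)⁻¹
  have hKl : 2 * K * l ^ (q - 1) = 1 := by
    rw [← Real.rpow_mul (by positivity), inv_mul_cancel₀ hpq.symm.sub_one_pos.ne', Real.rpow_one,
      mul_inv_cancel₀ (by positivity)]
  refine ⟨(2 * K * l⁻¹) ^ p⁻¹, by positivity, fun ε hε j k f => ?_⟩
  have hpow := integral_norm_rpow_le_of_pairing hpq _ (by positivity) hKl (H ε hε j k f)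
  have hnorm (g : 𝓢(E, ℂ)) := (g.memLp (ENNReal.ofReal p) volume).eLpNorm_eq_integral_rpow_norm
    (by simpa using hp0) (by simp)
  rw [hnorm, hnorm, ENNReal.toReal_ofReal hp0.le, ← ENNReal.ofReal_mul (by positivity),
    ← Real.mul_rpow (by positivity) (integral_nonneg fun x => by positivity)]
  exact ENNReal.ofReal_le_ofReal (Real.rpow_le_rpow
    (integral_nonneg fun x => by positivity) hpow (by positivity))

end Duality

/-! ### The tangential Hessian -/

section CoordinateCommutators

open SchwartzMap FourierTransform LineDeriv Laplacian Filter Topology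
open scoped Real

variable {E : Type*} [NormedAddCommGroup E] [InnerProductSpace ℝ E]

/-- Multiplication of Schwartz functions by the linear coordinate `x ↦ ⟪x, v⟫`. -/
def mulInner (v : E) : 𝓢(E, ℂ) →L[ℂ] 𝓢(E, ℂ) := smulLeftCLM ℂ fun x : E => inner ℝ x v

lemma mulInner_apply (v : E) (f : 𝓢(E, ℂ)) (x : E) : mulInner v f x = inner ℝ x v * f x := by
  rw [mulInner, smulLeftCLM_apply_apply (by fun_prop)]
  rfl

lemma lineDerivOp_mulInner (v w : E) (f : 𝓢(E, ℂ)) :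
    ∂_{w} (mulInner v f) = mulInner v (∂_{w} f) + inner ℝ w v • f := by
  ext x
  have hinner : HasDerivAt (fun t : ℝ => ((inner ℝ (x + t • w) v : ℝ) : ℂ))
      (inner ℝ w v : ℝ) 0 := by
    simp_rw [inner_add_left, real_inner_smul_left]
    exact ((hasDerivAt_mul_const (inner ℝ w v)).const_add _).ofReal_comp
  have hprod : HasLineDerivAt ℝ (mulInner v f) _ x w :=
    (hinner.mul (hasLineDerivAt_lineDerivOp (f := f) x w)).congr_of_eventuallyEq
      (Eventually.of_forall fun t => mulInner_apply v f _)
  rw [(hasLineDerivAt_lineDerivOp x w).unique hprod]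
  simp [mulInner_apply, add_comm]

lemma laplacian_mulInner [FiniteDimensional ℝ E] (v : E) (f : 𝓢(E, ℂ)) :
    Δ (mulInner v f) = mulInner v (Δ f) + (2 : ℝ) • ∂_{v} f := by
  set e := stdOrthonormalBasis ℝ E
  have hv : ∂_{v} f = ∑ i, inner ℝ (e i) v • ∂_{e i} f := by
    conv_lhs => rw [← e.sum_repr' v]
    simp_rw [lineDerivOp_left_sum, lineDerivOp_left_smul]
  simp_rw [SchwartzMap.laplacian_eq_sum e, hv, lineDerivOp_mulInner, lineDerivOp_add,
    lineDerivOp_smul, lineDerivOp_mulInner, map_sum, Finset.smul_sum, ← Finset.sum_add_distrib,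
    two_smul, add_assoc]

variable [FiniteDimensional ℝ E] [MeasurableSpace E] [BorelSpace E] {ε : ℝ}

lemma lineDerivOp_comm (f : 𝓢(E, ℂ)) (v w : E) : ∂_{v} (∂_{w} f) = ∂_{w} (∂_{v} f) := by
  rw [lineDeriv_eq_fourierMultiplierCLM (f := f) w, lineDerivOp_smul,
    lineDerivOp_fourierMultiplierCLM f (by fun_prop), lineDeriv_eq_fourierMultiplierCLM w]

lemma lineDerivOp_laplacian (f : 𝓢(E, ℂ)) (v : E) : ∂_{v} (Δ f) = Δ (∂_{v} f) := by
  simp_rw [SchwartzMap.laplacian_eq_sum (stdOrthonormalBasis ℝ E), lineDerivOp_sum,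
    lineDerivOp_comm _ v]

lemma res_smul_sub_laplacian (hε : 0 < ε) (f : 𝓢(E, ℂ)) : res (ε • f - Δ f) ε = f := by
  have hr := hasTemperateGrowth_resSymbol (E := E) hε
  rw [res, fourierMultiplierCLM_apply]
  refine Eq.trans ?_ (FourierTransform.fourierInv_fourier_eq f : 𝓕⁻ (𝓕 f : 𝓢(E, ℂ)) = f)
  congr 1
  ext ξ
  have h0 : ((ε + 4 * π ^ 2 * ‖ξ‖ ^ 2 : ℝ) : ℂ) ≠ 0 := by
    norm_cast
    positivity
  rw [smulLeftCLM_apply_apply hr, sub_eq_add_neg, FourierTransform.fourier_add,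
    FourierTransform.fourier_neg, FourierTransform.fourier_smul, add_apply, neg_apply, smul_apply,
    fourier_laplacian_apply, resSymbol, Complex.real_smul, Complex.real_smul, Complex.ofReal_inv,
    inv_mul_eq_iff_eq_mul₀ h0]
  push_cast
  ring

lemma laplacian_res (hε : 0 < ε) (f : 𝓢(E, ℂ)) : Δ (res f ε) = res (Δ f) ε := by
  simp_rw [SchwartzMap.laplacian_eq_sum (stdOrthonormalBasis ℝ E), lineDerivOp_res _ hε]
  exact (map_sum _ _ _).symm

lemma smul_res_sub_laplacian (hε : 0 < ε) (f : 𝓢(E, ℂ)) : ε • res f ε - Δ (res f ε) = f := by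
  rw [laplacian_res hε]
  refine Eq.trans ?_ (res_smul_sub_laplacian hε f)
  simp [res]

lemma res_mulInner (hε : 0 < ε) (v : E) (g : 𝓢(E, ℂ)) :
    res (mulInner v g) ε = mulInner v (res g ε) + (2 : ℝ) • ∂_{v} (res (res g ε) ε) := by
  have hcomm : ε • mulInner v (res g ε) - Δ (mulInner v (res g ε))
      = mulInner v g - (2 : ℝ) • ∂_{v} (res g ε) := by
    nth_rw 3 [← smul_res_sub_laplacian hε g]
    rw [laplacian_mulInner, map_sub, ContinuousLinearMap.map_smul_of_tower, sub_add_eq_sub_sub]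
  rw [← res_smul_sub_laplacian hε (mulInner v (res g ε)), hcomm,
    lineDerivOp_res (res g ε) hε]
  simp [res]

/-- The regularised double Riesz transform `∂_w ∂_v (ε - Δ)⁻¹`. -/
def riesz (f : 𝓢(E, ℂ)) (ε : ℝ) (v w : E) : 𝓢(E, ℂ) := ∂_{w} (∂_{v} (res f ε))

/-- The part of `-∂_b ∂_a U`, for `Δ U = ∂_w (⟪x, v⟫ f)`, made of double Riesz transforms of
`f`. -/
def rieszPart (f : 𝓢(E, ℂ)) (ε : ℝ) (v w a b : E) : 𝓢(E, ℂ) :=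
  inner ℝ a v • riesz f ε w b + inner ℝ b v • riesz f ε w a
    + (2 : ℝ) • riesz (riesz f ε w b) ε v a

lemma lineDerivOp_lineDerivOp_sub_res (hε : 0 < ε) {U f : 𝓢(E, ℂ)} {v w : E}
    (hvw : inner ℝ w v = 0) (hU : Δ U = ∂_{w} (mulInner v f)) (a b : E) :
    ∂_{b} (∂_{a} U) - ε • res (∂_{b} (∂_{a} U)) ε
      = -(mulInner v (∂_{b} (∂_{a} (∂_{w} (res f ε)))) + rieszPart f ε v w a b) := by
  have hF := smul_res_sub_laplacian hε (∂_{b} (∂_{a} U))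
  have hΔ : Δ (res (∂_{b} (∂_{a} U)) ε) = ∂_{b} (∂_{a} (∂_{w} (res (mulInner v f) ε))) := by
    simp_rw [laplacian_res hε, lineDerivOp_res _ hε, ← hU, lineDerivOp_laplacian]
  have hcomm : riesz (riesz f ε w b) ε v a = ∂_{b} (∂_{a} (∂_{w} (∂_{v} (res (res f ε) ε)))) := by
    simp_rw [riesz, ← lineDerivOp_res _ hε]
    rw [lineDerivOp_comm _ v b, lineDerivOp_comm _ a b, lineDerivOp_comm _ v w]
  nth_rw 1 [← hF]
  rw [hΔ, res_mulInner hε, sub_sub_cancel_left, rieszPart, hcomm]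
  simp only [lineDerivOp_add, lineDerivOp_smul, lineDerivOp_mulInner, hvw, zero_smul, add_zero,
    riesz]
  abel

end CoordinateCommutators

section TangentialHessian

open SchwartzMap FourierTransform LineDeriv Laplacian Filter Topology
open scoped Real

variable {E : Type*} [NormedAddCommGroup E] [InnerProductSpace ℝ E]
  [MeasurableSpace E] {ι : Type*} [Fintype ι] {p : ℝ}

/-- The contraction `∑ i, ∑ j, θ i θ j H i j` of a matrix of functions with a vector field. -/
def contract (θ : E → ι → ℝ) (H : ι → ι → 𝓢(E, ℂ)) (x : E) : ℂ :=
  ∑ i, ∑ j, (θ x i * θ x j) • H i j x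

/-- The components in the orthonormal basis `e` of a bounded vector field, tangent to the spheres
centred on the axis `ℝ e_m` in the hyperplanes orthogonal to it. -/
structure IsTangential (e : OrthonormalBasis ι ℝ E) (m : ι) (θ : E → ι → ℝ) : Prop where
  measurable : Measurable θ
  abs_le_one : ∀ x i, |θ x i| ≤ 1
  apply_axis : ∀ x, θ x m = 0
  sum_mul_inner : ∀ x, ∑ i, θ x i * inner ℝ x (e i) = 0

variable [BorelSpace E]

lemma measurable_contract {θ : E → ι → ℝ} (hθ : Measurable θ) (H : ι → ι → 𝓢(E, ℂ)) :
    Measurable (contract θ H) := by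
  have (f : 𝓢(E, ℂ)) : Measurable f := f.continuous.measurable
  unfold contract
  fun_prop

variable [FiniteDimensional ℝ E]

lemma tendsto_smul_res [Nontrivial E] (f : 𝓢(E, ℂ)) (x : E) :
    Tendsto (fun ε => (ε • res f ε) x) (𝓝[>] 0) (𝓝 0) := by
  have hsymbol {ε : ℝ} (hε : 0 < ε) (ξ : E) : ‖ε * resSymbol ε ξ‖ ≤ 1 := by
    rw [resSymbol, Real.norm_of_nonneg (by positivity), ← div_eq_mul_inv,
      div_le_one (by positivity)]
    exact le_add_of_nonneg_right (by positivity)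
  have heq : ∀ᶠ ε in 𝓝[>] (0 : ℝ), ∫ ξ, Complex.exp (↑(2 * π * inner ℝ ξ x) * Complex.I)
      * ((ε * resSymbol ε ξ : ℝ) * 𝓕 f ξ) = (ε • res f ε) x := by
    filter_upwards [self_mem_nhdsWithin] with ε hε
    rw [smul_apply, res, fourierMultiplierCLM_eq_integral _ (hasTemperateGrowth_resSymbol hε),
      ← integral_smul]
    refine integral_congr_ae (Eventually.of_forall fun ξ => ?_)
    simp only [Complex.ofReal_mul, Complex.real_smul]
    ring
  refine Tendsto.congr' heq ?_
  rw [← integral_zero E ℂ]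
  refine tendsto_integral_filter_of_dominated_convergence (fun ξ => ‖𝓕 f ξ‖) ?_ ?_
    (integrable_norm_fourier f) ?_
  · filter_upwards [self_mem_nhdsWithin] with ε hε
    have := (hasTemperateGrowth_resSymbol (E := E) hε).1.continuous
    exact Continuous.aestronglyMeasurable (by fun_prop)
  · filter_upwards [self_mem_nhdsWithin] with ε hε
    refine Eventually.of_forall fun ξ => ?_
    rw [norm_mul, norm_mul, Complex.norm_exp_ofReal_mul_I, one_mul, Complex.norm_real]
    exact mul_le_of_le_one_left (norm_nonneg _) (hsymbol hε ξ)
  · filter_upwards [Measure.ae_ne volume (0 : E)] with ξ hξ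
    have hlim : Tendsto (fun ε : ℝ => ε * resSymbol ε ξ) (𝓝[>] 0) (𝓝 0) := by
      have : ContinuousAt (fun ε : ℝ => ε * resSymbol ε ξ) 0 :=
        continuousAt_id.mul ((continuousAt_id.add continuousAt_const).inv₀ (by simp [hξ]))
      simpa using this.tendsto.mono_left nhdsWithin_le_nhds
    simpa using ((Complex.continuous_ofReal.tendsto' 0 0 rfl).comp hlim).mul_const (𝓕 f ξ)
      |>.const_mul (Complex.exp (↑(2 * π * inner ℝ ξ x) * Complex.I))

lemma exists_eLpNorm_rieszPart_le (hp : 1 < p) (e : OrthonormalBasis ι ℝ E) :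
    ∃ C : ℝ, 0 < C ∧ ∀ ε : ℝ, 0 < ε → ∀ (i m j k : ι) (f : 𝓢(E, ℂ)),
      eLpNorm (rieszPart f ε (e i) (e m) (e j) (e k)) (ENNReal.ofReal p) volume
        ≤ ENNReal.ofReal C * eLpNorm f (ENNReal.ofReal p) volume := by
  obtain ⟨C, hC, hriesz⟩ := exists_eLpNorm_lineDerivOp_res_le hp e
  refine ⟨C + C + 2 * (C * C), by positivity, fun ε hε i m j k f => ?_⟩
  have hp1 : 1 ≤ ENNReal.ofReal p := by simpa using hp.le
  have hmeas (g : 𝓢(E, ℂ)) : AEStronglyMeasurable g volume := g.continuous.aestronglyMeasurable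
  have hsmul (a b c d : ι) : eLpNorm (inner ℝ (e a) (e b) • riesz f ε (e c) (e d))
      (ENNReal.ofReal p) volume ≤ ENNReal.ofReal C * eLpNorm f (ENNReal.ofReal p) volume := by
    refine (eLpNorm_const_smul _ (⇑(riesz f ε (e c) (e d))) _ _).trans_le ?_
    refine (mul_le_of_le_one_left' ?_).trans (hriesz ε hε c d f)
    rw [← ofReal_norm, ENNReal.ofReal_le_one]
    simpa using norm_inner_le_norm (𝕜 := ℝ) (e a) (e b)
  have htwo : eLpNorm ((2 : ℝ) • riesz (riesz f ε (e m) (e k)) ε (e i) (e j))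
      (ENNReal.ofReal p) volume
        ≤ ENNReal.ofReal (2 * (C * C)) * eLpNorm f (ENNReal.ofReal p) volume := by
    refine (eLpNorm_const_smul _ (⇑(riesz (riesz f ε (e m) (e k)) ε (e i) (e j))) _ _).trans_le ?_
    rw [Real.enorm_of_nonneg zero_le_two, ENNReal.ofReal_mul zero_le_two, ENNReal.ofReal_mul hC.le,
      mul_assoc, mul_assoc]
    gcongr
    exact (hriesz ε hε i j _).trans (by gcongr; exact hriesz ε hε m k f)
  rw [ENNReal.ofReal_add (by positivity) (by positivity), ENNReal.ofReal_add hC.le hC.le, add_mul,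
    add_mul]
  refine (eLpNorm_add_le ((hmeas _).add (hmeas _)) (hmeas _) hp1).trans (add_le_add ?_ htwo)
  exact (eLpNorm_add_le (hmeas _) (hmeas _) hp1).trans (add_le_add (hsmul _ _ _ _) (hsmul _ _ _ _))

lemma eLpNorm_contract_le (hp : 1 ≤ p) {θ : E → ι → ℝ} (hθ : Measurable θ)
    (hθ1 : ∀ x i, |θ x i| ≤ 1) {H : ι → ι → 𝓢(E, ℂ)} {M : ℝ≥0∞}
    (hM : ∀ i j, eLpNorm (H i j) (ENNReal.ofReal p) volume ≤ M) :
    eLpNorm (contract θ H) (ENNReal.ofReal p) volume ≤ Fintype.card ι ^ 2 * M := by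
  have (f : 𝓢(E, ℂ)) : Measurable f := f.continuous.measurable
  have hsum : contract θ H = ∑ q : ι × ι, fun x => (θ x q.1 * θ x q.2) • H q.1 q.2 x := by
    ext x
    simp only [contract, Finset.sum_apply, Fintype.sum_prod_type]
  rw [hsum]
  refine (eLpNorm_sum_le (fun q _ => Measurable.aestronglyMeasurable (by fun_prop))
    (by simpa using hp)).trans ((Finset.sum_le_card_nsmul _ _ M fun q _ => ?_).trans_eq ?_)
  · refine (eLpNorm_mono fun x => ?_).trans (hM q.1 q.2)
    rw [norm_smul, norm_mul]
    exact mul_le_of_le_one_left (norm_nonneg _)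
      (mul_le_one₀ (hθ1 x q.1) (norm_nonneg _) (hθ1 x q.2))
  · simp [sq]

lemma tendsto_contract_sub_res [Nontrivial E] (θ : E → ι → ℝ) (H : ι → ι → 𝓢(E, ℂ)) (x : E) :
    Tendsto (fun ε => contract θ (fun i j => H i j - ε • res (H i j) ε) x) (𝓝[>] 0)
      (𝓝 (contract θ H x)) := by
  refine tendsto_finsetSum _ fun i _ => tendsto_finsetSum _ fun j _ => ?_
  simpa using ((tendsto_smul_res (H i j) x).const_sub (H i j x)).const_smul (θ x i * θ x j)

/- The terms of `∂_k ∂_j (U i)` proportional to the coordinate `⟪x, e i⟫` disappear under the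
contraction, because a tangential field is orthogonal to the position vector. -/
lemma contract_sub_res {e : OrthonormalBasis ι ℝ E} {m : ι} {θ : E → ι → ℝ}
    (hθ : IsTangential e m θ) {U : ι → 𝓢(E, ℂ)} {f : 𝓢(E, ℂ)}
    (hU : ∀ i, i ≠ m → Δ (U i) = ∂_{e m} (mulInner (e i) f)) (k : ι) {ε : ℝ} (hε : 0 < ε) :
    contract θ (fun i j => ∂_{e k} (∂_{e j} (U i)) - ε • res (∂_{e k} (∂_{e j} (U i))) ε)
      = contract θ (fun i j => -rieszPart f ε (e i) (e m) (e j) (e k)) := by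
  ext x
  have hterm (i j : ι) : (θ x i * θ x j) • (∂_{e k} (∂_{e j} (U i))
        - ε • res (∂_{e k} (∂_{e j} (U i))) ε) x
      = (θ x i * θ x j) • (-rieszPart f ε (e i) (e m) (e j) (e k)) x
        - (θ x i * inner ℝ x (e i)) • (θ x j • ∂_{e k} (∂_{e j} (∂_{e m} (res f ε))) x) := by
    rcases eq_or_ne i m with rfl | hi
    · simp [hθ.apply_axis]
    · rw [lineDerivOp_lineDerivOp_sub_res hε (e.inner_eq_zero hi.symm) (hU i hi)]
      simp only [neg_apply, add_apply, mulInner_apply, Complex.real_smul]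
      push_cast
      ring
  simp only [contract, hterm, Finset.sum_sub_distrib, ← Finset.smul_sum, ← Finset.sum_smul,
    hθ.sum_mul_inner, zero_smul, sub_zero]

theorem exists_eLpNorm_contract_le (hp : 1 < p) (e : OrthonormalBasis ι ℝ E) (m : ι) :
    ∃ C : ℝ, 0 < C ∧ ∀ (θ : E → ι → ℝ), IsTangential e m θ →
      ∀ (U : ι → 𝓢(E, ℂ)) (f : 𝓢(E, ℂ)),
        (∀ i, i ≠ m → Δ (U i) = ∂_{e m} (mulInner (e i) f)) → ∀ k,
        eLpNorm (contract θ fun i j => ∂_{e k} (∂_{e j} (U i))) (ENNReal.ofReal p) volume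
          ≤ ENNReal.ofReal C * eLpNorm f (ENNReal.ofReal p) volume := by
  obtain ⟨C, hC, hriesz⟩ := exists_eLpNorm_rieszPart_le hp e
  have : Nontrivial E := ⟨e m, 0, e.toBasis.ne_zero m⟩
  have : Nonempty ι := ⟨m⟩
  refine ⟨Fintype.card ι ^ 2 * C, by positivity, fun θ hθ U f hU k => ?_⟩
  refine Lp.eLpNorm_le_of_ae_tendsto (u := 𝓝[>] 0) ?_
    (fun ε => (measurable_contract hθ.measurable _).aestronglyMeasurable)
    (Eventually.of_forall (tendsto_contract_sub_res θ fun i j => ∂_{e k} (∂_{e j} (U i))))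
  filter_upwards [self_mem_nhdsWithin] with ε hε
  rw [contract_sub_res hθ hU k hε, ENNReal.ofReal_mul (by positivity), mul_assoc,
    ENNReal.ofReal_pow (by positivity), ENNReal.ofReal_natCast]
  refine eLpNorm_contract_le hp.le hθ.measurable hθ.abs_le_one fun i j => ?_
  exact (eLpNorm_neg _ _ _).trans_le (hriesz ε hε i m j k f)

end TangentialHessian

/-! ### Axially symmetric fields -/

section HadamardQuotient

open Filter
open scoped ContDiff

variable {E F : Type*} [NormedAddCommGroup E] [NormedSpace ℝ E] [NormedAddCommGroup F]
  [NormedSpace ℝ F]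

lemma contDiff_setIntegral_Icc {h : E × ℝ → F} (hh : ContDiff ℝ ∞ h) :
    ContDiff ℝ ∞ fun x => ∫ s in Icc (0 : ℝ) 1, h (x, s) := by
  obtain ⟨χ, hχ, hχc, hχ1⟩ : ∃ χ : ℝ → ℝ, ContDiff ℝ ∞ χ ∧ HasCompactSupport χ ∧
      ∀ s ∈ Icc (0 : ℝ) 1, χ s = 1 := by
    let b : ContDiffBump (0 : ℝ) := ⟨1, 2, one_pos, one_lt_two⟩
    refine ⟨b, b.contDiff, b.hasCompactSupport, fun s hs => b.one_of_mem_closedBall ?_⟩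
    rw [mem_closedBall_zero_iff, Real.norm_of_nonneg hs.1]
    exact hs.2
  have hsupp (x : E) (s : ℝ) (hs : s ∉ Neg.neg '' tsupport χ) : χ (-s) • h (x, -s) = 0 := by
    rw [image_eq_zero_of_notMem_tsupport fun hmem => hs ⟨-s, hmem, neg_neg s⟩, zero_smul]
  -- The integral is the convolution of the indicator of `[0, 1]` with the cut-off integrand at `0`.
  have hconv := contDiffOn_convolution_right_with_param (n := ⊤) (μ := volume)
    (ContinuousLinearMap.lsmul ℝ ℝ) (f := (Icc (0 : ℝ) 1).indicator 1)
    (g := fun (x : E) (s : ℝ) => χ (-s) • h (x, -s)) isOpen_univ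
    (hχc.isCompact.image continuous_neg) (fun x s _ hs => hsupp x s hs)
    ((integrable_indicator_iff measurableSet_Icc).2
      (integrableOn_const (by simp))).locallyIntegrable
    (ContDiff.contDiffOn (f := fun q : E × ℝ => χ (-q.2) • h (q.1, -q.2)) (by fun_prop))
  rw [univ_prod_univ, contDiffOn_univ] at hconv
  convert hconv.comp (contDiff_id.prodMk (contDiff_const (c := (0 : ℝ)))) using 1
  ext x
  simp only [Function.comp, id, MeasureTheory.convolution, ContinuousLinearMap.lsmul_apply,
    zero_sub, neg_neg]
  rw [← integral_indicator measurableSet_Icc]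
  refine integral_congr_ae (Eventually.of_forall fun s => ?_)
  by_cases hs : s ∈ Icc (0 : ℝ) 1
  · simp [hs, hχ1 s hs]
  · simp [hs]

lemma eq_smul_setIntegral_fderiv [CompleteSpace F] {W : E → F} (hW : ContDiff ℝ 1 W)
    {ℓ : E →L[ℝ] ℝ} {v : E} (hv : ℓ v = 1) (h0 : ∀ x, ℓ x = 0 → W x = 0) (x : E) :
    W x = ℓ x • ∫ s in Icc (0 : ℝ) 1, fderiv ℝ W (x + ((s - 1) * ℓ x) • v) v := by
  have hderiv (s : ℝ) : HasDerivAt (fun s => W (x + ((s - 1) * ℓ x) • v))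
      (ℓ x • fderiv ℝ W (x + ((s - 1) * ℓ x) • v) v) s := by
    have hline : HasDerivAt (fun s : ℝ => x + ((s - 1) * ℓ x) • v) (ℓ x • v) s := by
      simpa using ((((hasDerivAt_id s).sub_const 1).mul_const (ℓ x)).smul_const v).const_add x
    rw [← map_smul]
    exact (hW.differentiable one_ne_zero _).hasFDerivAt.comp_hasDerivAt s hline
  have hcont : Continuous fun s : ℝ => ℓ x • fderiv ℝ W (x + ((s - 1) * ℓ x) • v) v := by
    have := hW.continuous_fderiv one_ne_zero
    fun_prop
  have hftc := intervalIntegral.integral_eq_sub_of_hasDerivAt (fun s _ => hderiv s)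
    (hcont.intervalIntegrable 0 1)
  rw [h0 (x + ((0 - 1) * ℓ x) • v) (by simp [hv]), intervalIntegral.integral_smul,
    intervalIntegral.integral_of_le zero_le_one, ← integral_Icc_eq_integral_Ioc] at hftc
  simpa using hftc.symm

lemma exists_contDiff_eq_smul [CompleteSpace F] {W : E → F} (hW : ContDiff ℝ ∞ W)
    (hc : HasCompactSupport W) {ℓ : E →L[ℝ] ℝ} (hℓ : ℓ ≠ 0) (h0 : ∀ x, ℓ x = 0 → W x = 0) :
    ∃ Q : E → F, ContDiff ℝ ∞ Q ∧ HasCompactSupport Q ∧ ∀ x, W x = ℓ x • Q x := by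
  obtain ⟨v, hv⟩ := LinearMap.surjective (f := ℓ.toLinearMap) (mod_cast hℓ) 1
  have hWeq := eq_smul_setIntegral_fderiv (hW.of_le (by simp)) hv h0
  refine ⟨_, contDiff_setIntegral_Icc (h := fun q => fderiv ℝ W (q.1 + ((q.2 - 1) * ℓ q.1) • v) v)
    ?_, HasCompactSupport.intro hc fun x hx => ?_, hWeq⟩
  · have := hW.fderiv_right (m := ∞) (by simp)
    fun_prop
  · by_cases hx0 : ℓ x = 0
    · have : fderiv ℝ W x = 0 :=
        image_eq_zero_of_notMem_tsupport fun hmem => hx (tsupport_fderiv_subset ℝ hmem)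
      simp [hx0, this]
    · exact (smul_eq_zero_iff_right hx0).1 ((hWeq x).symm.trans
        (image_eq_zero_of_notMem_tsupport hx))

end HadamardQuotient

section PartialDerivatives

open Filter Topology
open scoped ContDiff

lemma opNorm_le_sum_norm_apply {E F ι : Type*} [NormedAddCommGroup E] [InnerProductSpace ℝ E]
    [SeminormedAddCommGroup F] [NormedSpace ℝ F] [Fintype ι] (e : OrthonormalBasis ι ℝ E)
    (L : E →L[ℝ] F) : ‖L‖ ≤ ∑ i, ‖L (e i)‖ := by
  refine L.opNorm_le_bound (by positivity) fun x => ?_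
  conv_lhs => rw [← e.sum_repr' x, map_sum]
  rw [Finset.sum_mul]
  refine norm_sum_le_of_le _ fun i _ => ?_
  rw [map_smul, norm_smul, mul_comm]
  gcongr
  simpa using norm_inner_le_norm (𝕜 := ℝ) (e i) x

lemma ae_coord_ne_zero {ι : Type*} [Fintype ι] (i : ι) : ∀ᵐ x : EuclideanSpace ℝ ι, x i ≠ 0 := by
  classical
  set ℓ : EuclideanSpace ℝ ι →L[ℝ] ℝ := EuclideanSpace.proj i
  have hker : LinearMap.ker ℓ.toLinearMap ≠ ⊤ := fun h => by
    have : EuclideanSpace.single i (1 : ℝ) ∈ LinearMap.ker ℓ.toLinearMap := h ▸ trivial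
    simp [ℓ] at this
  simp only [ae_iff, not_not]
  exact Measure.addHaar_submodule volume _ hker

variable {f g : E3 → ℝ} {x : E3}

lemma pd_congr (h : f =ᶠ[𝓝 x] g) (k : Fin 3) : pd k f x = pd k g x := by
  rw [pd, pd, h.fderiv_eq]

lemma pd_coord (i k : Fin 3) (x : E3) : pd k (fun y : E3 => y i) x = if i = k then 1 else 0 := by
  rw [pd, (PiLp.hasFDerivAt_apply 2 x i).fderiv]
  simp

lemma pd_add (hf : DifferentiableAt ℝ f x) (hg : DifferentiableAt ℝ g x) (k : Fin 3) :
    pd k (fun y => f y + g y) x = pd k f x + pd k g x := by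
  simp [pd, fderiv_fun_add hf hg]

lemma pd_coord_mul (hf : DifferentiableAt ℝ f x) (i k : Fin 3) :
    pd k (fun y => y i * f y) x = x i * pd k f x + if i = k then f x else 0 := by
  have hi : DifferentiableAt ℝ (fun y : E3 => y i) x := by fun_prop
  rw [← mul_boole, ← pd_coord i k x]
  simp [pd, fderiv_fun_mul hi hf]

lemma contDiffAt_pd (hf : ContDiffAt ℝ ∞ f x) (k : Fin 3) : ContDiffAt ℝ ∞ (pd k f) x :=
  (hf.fderiv_right (m := ∞) (by simp)).clm_apply contDiffAt_const

lemma contDiff_pd (hf : ContDiff ℝ ∞ f) (k : Fin 3) : ContDiff ℝ ∞ (pd k f) :=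
  contDiff_iff_contDiffAt.2 fun _ => contDiffAt_pd hf.contDiffAt k

lemma hasCompactSupport_pd (hf : HasCompactSupport f) (k : Fin 3) : HasCompactSupport (pd k f) :=
  hf.fderiv_apply ℝ _

end PartialDerivatives

section Radial

open Filter Topology
open scoped ContDiff

lemma rad_nonneg (x : E3) : 0 ≤ rad x := Real.sqrt_nonneg _

lemma rad_sq (x : E3) : rad x ^ 2 = x 0 ^ 2 + x 1 ^ 2 := Real.sq_sqrt (by positivity)

lemma continuous_rad : Continuous rad := by
  unfold rad
  fun_prop

lemma abs_coord_le_rad {i : Fin 3} (hi : i ≠ 2) (x : E3) : |x i| ≤ rad x := by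
  obtain rfl | rfl : i = 0 ∨ i = 1 := by omega
  · exact Real.abs_le_sqrt (le_add_of_nonneg_right (sq_nonneg _))
  · exact Real.abs_le_sqrt (le_add_of_nonneg_left (sq_nonneg _))

lemma ae_rad_ne_zero : ∀ᵐ x : E3, rad x ≠ 0 := by
  filter_upwards [ae_coord_ne_zero 0] with x hx h
  exact hx (abs_nonpos_iff.1 (h ▸ abs_coord_le_rad (by decide) x))

variable {x : E3}

lemma eventually_rad_ne_zero (hx : rad x ≠ 0) : ∀ᶠ y in 𝓝 x, rad y ≠ 0 :=
  continuous_rad.continuousAt.eventually_ne hx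

lemma coord_sq_add_coord_sq_ne_zero (hx : rad x ≠ 0) : x 0 ^ 2 + x 1 ^ 2 ≠ 0 := by
  rw [← rad_sq]
  exact pow_ne_zero 2 hx

lemma contDiffAt_rad (hx : rad x ≠ 0) : ContDiffAt ℝ ∞ rad x :=
  ContDiffAt.sqrt (by fun_prop) (coord_sq_add_coord_sq_ne_zero hx)

lemma hasFDerivAt_rad (hx : rad x ≠ 0) :
    HasFDerivAt rad ((x 0 / rad x) • (EuclideanSpace.proj 0 : E3 →L[ℝ] ℝ)
      + (x 1 / rad x) • (EuclideanSpace.proj 1 : E3 →L[ℝ] ℝ)) x := by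
  have hcoord (i : Fin 3) : HasFDerivAt (fun y : E3 => y i)
      (EuclideanSpace.proj i : E3 →L[ℝ] ℝ) x := PiLp.hasFDerivAt_apply 2 x i
  refine ((((hcoord 0).pow 2).fun_add ((hcoord 1).pow 2)).sqrt
    (coord_sq_add_coord_sq_ne_zero hx)).congr_fderiv ?_
  have hrad : √(x 0 ^ 2 + x 1 ^ 2) = rad x := rfl
  ext y
  simp only [hrad, one_div, mul_inv_rev, Nat.add_one_sub_one, pow_one, nsmul_eq_mul,
    Nat.cast_ofNat, smul_add, add_apply, smul_apply, PiLp.proj_apply, smul_eq_mul]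
  field_simp

variable {G : ℝ → ℝ → ℝ}

lemma hasFDerivAt_comp_rad (hx : rad x ≠ 0)
    (hG : DifferentiableAt ℝ (fun v : ℝ × ℝ => G v.1 v.2) (rad x, x 2)) :
    HasFDerivAt (fun y => G (rad y) (y 2))
      (pdr G (rad x) (x 2) • ((x 0 / rad x) • (EuclideanSpace.proj 0 : E3 →L[ℝ] ℝ)
          + (x 1 / rad x) • (EuclideanSpace.proj 1 : E3 →L[ℝ] ℝ))
        + pdz G (rad x) (x 2) • (EuclideanSpace.proj 2 : E3 →L[ℝ] ℝ)) x := by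
  set L := fderiv ℝ (fun v : ℝ × ℝ => G v.1 v.2) (rad x, x 2)
  have hr : HasDerivAt (fun r => G r (x 2)) (L (1, 0)) (rad x) :=
    hG.hasFDerivAt.comp_hasDerivAt (f := fun r : ℝ => (r, x 2)) (rad x)
      ((hasDerivAt_id _).prodMk (hasDerivAt_const _ _))
  have hz : HasDerivAt (fun z => G (rad x) z) (L (0, 1)) (x 2) :=
    hG.hasFDerivAt.comp_hasDerivAt (f := fun z : ℝ => (rad x, z)) (x 2)
      ((hasDerivAt_const _ _).prodMk (hasDerivAt_id _))
  have hL (a b : ℝ) : L (a, b) = L (1, 0) * a + L (0, 1) * b := by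
    have : (a, b) = a • ((1 : ℝ), (0 : ℝ)) + b • ((0 : ℝ), (1 : ℝ)) := by simp
    rw [this, map_add, map_smul, map_smul, smul_eq_mul, smul_eq_mul, mul_comm a, mul_comm b]
  refine (hG.hasFDerivAt.comp x
    ((hasFDerivAt_rad hx).prodMk (PiLp.hasFDerivAt_apply 2 x 2))).congr_fderiv ?_
  rw [pdr, pdz, hr.deriv, hz.deriv]
  ext y
  exact hL _ _

lemma pd_comp_rad (hx : rad x ≠ 0)
    (hG : DifferentiableAt ℝ (fun v : ℝ × ℝ => G v.1 v.2) (rad x, x 2)) {k : Fin 3} (hk : k ≠ 2) :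
    pd k (fun y => G (rad y) (y 2)) x = pdr G (rad x) (x 2) * (x k / rad x) := by
  rw [pd, (hasFDerivAt_comp_rad hx hG).fderiv]
  obtain rfl | rfl : k = 0 ∨ k = 1 := by omega
  all_goals simp

lemma pd_two_comp_rad (hx : rad x ≠ 0)
    (hG : DifferentiableAt ℝ (fun v : ℝ × ℝ => G v.1 v.2) (rad x, x 2)) :
    pd 2 (fun y => G (rad y) (y 2)) x = pdz G (rad x) (x 2) := by
  rw [pd, (hasFDerivAt_comp_rad hx hG).fderiv]
  simp

/-- The components of the angular unit vector `e_θ`, with value `0` on the axis. -/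
def eTheta (x : E3) : Fin 3 → ℝ := ![-x 1 / rad x, x 0 / rad x, 0]

lemma sum_eTheta_mul_coord (x : E3) : ∑ i, eTheta x i * x i = 0 := by
  simp only [Fin.sum_univ_three, eTheta, Matrix.cons_val]
  ring

lemma isTangential_eTheta : IsTangential (EuclideanSpace.basisFun (Fin 3) ℝ) 2 eTheta where
  measurable := by
    have := continuous_rad.measurable
    refine measurable_pi_lambda _ fun i => ?_
    fin_cases i <;> simp only [eTheta] <;> fun_prop
  abs_le_one x i := by
    have hdiv {i : Fin 3} (hi : i ≠ 2) : |x i| / |rad x| ≤ 1 := by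
      rw [abs_of_nonneg (rad_nonneg x)]
      exact div_le_one_of_le₀ (abs_coord_le_rad hi x) (rad_nonneg x)
    fin_cases i <;> simp [eTheta, abs_div, hdiv]
  apply_axis _ := rfl
  sum_mul_inner x := by
    simpa [EuclideanSpace.inner_single_right] using sum_eTheta_mul_coord x

lemma sum_eTheta_mul_self (hx : rad x ≠ 0) : ∑ i, eTheta x i * eTheta x i = 1 := by
  have := rad_sq x
  simp only [Fin.sum_univ_three, eTheta, Matrix.cons_val]
  field_simp
  linarith

lemma sum_eTheta_mul_pd_comp_rad (hx : rad x ≠ 0)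
    (hG : DifferentiableAt ℝ (fun v : ℝ × ℝ => G v.1 v.2) (rad x, x 2)) :
    ∑ j, eTheta x j * pd j (fun y => G (rad y) (y 2)) x = 0 := by
  rw [Fin.sum_univ_three, pd_comp_rad hx hG (by decide), pd_comp_rad hx hG (by decide)]
  simp only [eTheta, Matrix.cons_val]
  ring

end Radial

section SolenoidalHessian

open SchwartzMap LineDeriv Laplacian

lemma laplacian_eq_lineDerivOp_vorticity {E ι : Type*} [NormedAddCommGroup E]
    [InnerProductSpace ℝ E] [FiniteDimensional ℝ E] [MeasurableSpace E] [BorelSpace E] [Fintype ι]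
    {e : OrthonormalBasis ι ℝ E}
    {m : ι} {V : ι → 𝓢(E, ℂ)}
    (hcurl : ∀ i j, i ≠ m → j ≠ m → ∂_{e i} (V j) = ∂_{e j} (V i))
    (hdiv : ∑ j, ∂_{e j} (V j) = 0) {i : ι} (hi : i ≠ m) :
    Δ (V i) = ∂_{e m} (∂_{e m} (V i) - ∂_{e i} (V m)) := by
  classical
  have hterm (j : ι) : ∂_{e j} (∂_{e j} (V i)) = ∂_{e i} (∂_{e j} (V j))
      + if j = m then ∂_{e m} (∂_{e m} (V i) - ∂_{e i} (V m)) else 0 := by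
    split_ifs with hj
    · rw [hj, sub_eq_add_neg, lineDerivOp_add, lineDerivOp_neg, lineDerivOp_comm (V m)]
      abel
    · rw [hcurl j i hj hi, lineDerivOp_comm (V j), add_zero]
  rw [SchwartzMap.laplacian_eq_sum e, Finset.sum_congr rfl fun j _ => hterm j,
    Finset.sum_add_distrib, ← lineDerivOp_sum, hdiv]
  simp

end SolenoidalHessian

section SwirlFree

open SchwartzMap LineDeriv Laplacian Filter Topology
open scoped ContDiff

/-- A real test function as a complex Schwartz function. -/
def toSchwartzC (f : E3 → ℝ) (hf : ContDiff ℝ ∞ f) (hc : HasCompactSupport f) : 𝓢(E3, ℂ) :=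
  HasCompactSupport.toSchwartzMap (f := fun x => (f x : ℂ))
    (hc.comp_left (g := fun t : ℝ => (t : ℂ)) Complex.ofReal_zero)
    (Complex.ofRealCLM.contDiff.comp hf)

lemma toSchwartzC_apply {f : E3 → ℝ} (hf : ContDiff ℝ ∞ f) (hc : HasCompactSupport f) (x : E3) :
    toSchwartzC f hf hc x = f x := rfl

lemma lineDerivOp_toSchwartzC {f : E3 → ℝ} (hf : ContDiff ℝ ∞ f) (hc : HasCompactSupport f)
    (k : Fin 3) :
    ∂_{EuclideanSpace.basisFun (Fin 3) ℝ k} (toSchwartzC f hf hc)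
      = toSchwartzC (pd k f) (contDiff_pd hf k) (hasCompactSupport_pd hc k) := by
  ext x
  rw [lineDerivOp_apply_eq_fderiv, EuclideanSpace.basisFun_apply]
  have h := Complex.ofRealCLM.hasFDerivAt.comp x ((hf.differentiable (by simp)) x).hasFDerivAt
  exact congrArg (fun M : E3 →L[ℝ] ℂ => M (EuclideanSpace.single k 1)) h.fderiv

/-- The function `u^r / r` on `ℝ³`. -/
def overRad (ur : ℝ → ℝ → ℝ) (x : E3) : ℝ := ur (rad x) (x 2) / rad x

section OverRad

variable {ur : ℝ → ℝ → ℝ} (hur : ContDiff ℝ ∞ fun v : ℝ × ℝ => ur v.1 v.2) {x : E3}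
  (hx : rad x ≠ 0)
include hur hx

lemma contDiffAt_overRad : ContDiffAt ℝ ∞ (overRad ur) x :=
  (hur.contDiffAt.comp x ((contDiffAt_rad hx).prodMk (by fun_prop))).div (contDiffAt_rad hx) hx

lemma differentiableAt_div_fst :
    DifferentiableAt ℝ (fun v : ℝ × ℝ => ur v.1 v.2 / v.1) (rad x, x 2) :=
  (hur.contDiffAt.div (contDiffAt_fst (n := ∞)) hx).differentiableAt (by simp)

lemma pd_overRad {k : Fin 3} (hk : k ≠ 2) :
    pd k (overRad ur) x = pdr (fun r z => ur r z / r) (rad x) (x 2) * (x k / rad x) :=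
  pd_comp_rad (G := fun r z => ur r z / r) hx (differentiableAt_div_fst hur hx) hk

lemma pd_two_overRad : pd 2 (overRad ur) x = pdz ur (rad x) (x 2) / rad x :=
  (pd_two_comp_rad (G := fun r z => ur r z / r) hx (differentiableAt_div_fst hur hx)).trans
    (deriv_div_const _)

lemma sum_eTheta_mul_pd_overRad : ∑ j, eTheta x j * pd j (overRad ur) x = 0 :=
  sum_eTheta_mul_pd_comp_rad (G := fun r z => ur r z / r) hx
    (differentiableAt_div_fst hur hx)

end OverRad

/-- The field `U` is a divergence-free test field `u^r e_r + u^z e_z` without swirl. -/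
structure SwirlFreeField (U : Fin 3 → E3 → ℝ) (ur uz : ℝ → ℝ → ℝ) : Prop where
  contDiff : ∀ i, ContDiff ℝ ∞ (U i)
  hasCompactSupport : ∀ i, HasCompactSupport (U i)
  contDiff_ur : ContDiff ℝ ∞ fun v : ℝ × ℝ => ur v.1 v.2
  contDiff_uz : ContDiff ℝ ∞ fun v : ℝ × ℝ => uz v.1 v.2
  eq_mul : ∀ i, i ≠ 2 → ∀ x, rad x ≠ 0 → U i x = x i * overRad ur x
  eq_uz : ∀ x, rad x ≠ 0 → U 2 x = uz (rad x) (x 2)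
  div_eq_zero : ∀ x, ∑ i, pd i (U i) x = 0

namespace SwirlFreeField

variable {U : Fin 3 → E3 → ℝ} {ur uz : ℝ → ℝ → ℝ} {x : E3} {i : Fin 3}

lemma pd_eq (h : SwirlFreeField U ur uz) (hi : i ≠ 2) (k : Fin 3) (hx : rad x ≠ 0) :
    pd k (U i) x = x i * pd k (overRad ur) x + if i = k then overRad ur x else 0 := by
  have hU : U i =ᶠ[𝓝 x] fun y => y i * overRad ur y :=
    (eventually_rad_ne_zero hx).mono fun y hy => h.eq_mul i hi y hy
  rw [pd_congr hU, pd_coord_mul ((contDiffAt_overRad h.contDiff_ur hx).differentiableAt (by simp))]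

lemma pd_pd_eq (h : SwirlFreeField U ur uz) (hi : i ≠ 2) (j k : Fin 3) (hx : rad x ≠ 0) :
    pd k (pd j (U i)) x = x i * pd k (pd j (overRad ur)) x
      + (if i = k then pd j (overRad ur) x else 0)
      + if i = j then pd k (overRad ur) x else 0 := by
  have hφ := contDiffAt_overRad h.contDiff_ur hx
  have hU : pd j (U i) =ᶠ[𝓝 x] fun y => y i * pd j (overRad ur) y
      + if i = j then overRad ur y else 0 :=
    (eventually_rad_ne_zero hx).mono fun y hy => h.pd_eq hi j hy
  have hpd : DifferentiableAt ℝ (pd j (overRad ur)) x :=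
    (contDiffAt_pd hφ j).differentiableAt (by simp)
  have hmul : DifferentiableAt ℝ (fun y : E3 => y i * pd j (overRad ur) y) x := by fun_prop
  rw [pd_congr hU, pd_add hmul, pd_coord_mul hpd]
  · split_ifs <;> simp [pd]
  · split_ifs
    · exact hφ.differentiableAt (by simp)
    · exact differentiableAt_const _

lemma pd_comm (h : SwirlFreeField U ur uz) {j : Fin 3} (hi : i ≠ 2) (hj : j ≠ 2) :
    pd i (U j) = pd j (U i) := by
  refine (Continuous.ae_eq_iff_eq volume (contDiff_pd (h.contDiff j) i).continuous
    (contDiff_pd (h.contDiff i) j).continuous).1 ?_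
  filter_upwards [ae_rad_ne_zero] with x hx
  rw [h.pd_eq hj i hx, h.pd_eq hi j hx, pd_overRad h.contDiff_ur hx hi,
    pd_overRad h.contDiff_ur hx hj, mul_left_comm, mul_left_comm (x i), mul_div_left_comm]
  simp only [eq_comm]

lemma pd_sub_pd_eq (h : SwirlFreeField U ur uz) (hi : i ≠ 2) (hx : rad x ≠ 0) :
    pd 2 (U i) x - pd i (U 2) x = x i * OmegaFun ur uz x := by
  have hU : U 2 =ᶠ[𝓝 x] fun y => uz (rad y) (y 2) :=
    (eventually_rad_ne_zero hx).mono fun y hy => h.eq_uz y hy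
  rw [h.pd_eq hi 2 hx, if_neg hi, pd_two_overRad h.contDiff_ur hx, pd_congr hU,
    pd_comp_rad hx (h.contDiff_uz.differentiable (by simp) _) hi, OmegaFun]
  ring

/- `e_θ` is orthogonal to `x`, has length one, and annihilates the gradient of `u^r / r`; hence only
the terms `∂_k (u^r / r) δ_{ij}` of the second derivatives of `x_i u^r / r` survive. -/
lemma pd_overRad_eq (h : SwirlFreeField U ur uz) (k : Fin 3) (hx : rad x ≠ 0) :
    pd k (overRad ur) x = ∑ i, ∑ j, eTheta x i * eTheta x j * pd k (pd j (U i)) x := by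
  have hterm (i j : Fin 3) : eTheta x i * eTheta x j * pd k (pd j (U i)) x
      = eTheta x i * x i * (eTheta x j * pd k (pd j (overRad ur)) x)
        + (if i = k then eTheta x i else 0) * (eTheta x j * pd j (overRad ur) x)
        + if i = j then eTheta x i * eTheta x i * pd k (overRad ur) x else 0 := by
    rcases eq_or_ne i 2 with rfl | hi
    · simp [isTangential_eTheta.apply_axis]
    · rw [h.pd_pd_eq hi j k hx]
      split_ifs <;> subst_vars <;> ring
  simp only [hterm, Finset.sum_add_distrib, ← Finset.mul_sum, ← Finset.sum_mul,
    sum_eTheta_mul_coord, sum_eTheta_mul_pd_overRad h.contDiff_ur hx, Finset.sum_ite_eq,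
    Finset.mem_univ, if_true, sum_eTheta_mul_self hx]
  ring

end SwirlFreeField

lemma eq_zero_of_coord_mul_eq {f g : E3 → ℝ} (hf : Differentiable ℝ f) (hg : Differentiable ℝ g)
    (hfg : ∀ x, x 1 * f x = x 0 * g x) {x : E3} (hx : x 0 = 0) : f x = 0 := by
  rcases eq_or_ne (x 1) 0 with hx1 | hx1
  · have := congrArg (pd 1 · x) (funext hfg)
    simpa [pd_coord_mul (hf x), pd_coord_mul (hg x), hx, hx1] using this
  · have := hfg x
    simpa [hx, hx1] using this

namespace SwirlFreeField

variable {U : Fin 3 → E3 → ℝ} {ur uz : ℝ → ℝ → ℝ}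

lemma exists_pd_sub_pd_eq (h : SwirlFreeField U ur uz) :
    ∃ Q : E3 → ℝ, ContDiff ℝ ∞ Q ∧ HasCompactSupport Q ∧ Q =ᵐ[volume] OmegaFun ur uz ∧
      ∀ i, i ≠ 2 → ∀ x, pd 2 (U i) x - pd i (U 2) x = x i * Q x := by
  set W : Fin 3 → E3 → ℝ := fun i x => pd 2 (U i) x - pd i (U 2) x
  have hW (i : Fin 3) : ContDiff ℝ ∞ (W i) :=
    (contDiff_pd (h.contDiff i) 2).sub (contDiff_pd (h.contDiff 2) i)
  have hWd (i : Fin 3) : Differentiable ℝ (W i) := (hW i).differentiable (by simp)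
  have hWΩ {x : E3} (hx : rad x ≠ 0) (i : Fin 3) (hi : i ≠ 2) : W i x = x i * OmegaFun ur uz x :=
    h.pd_sub_pd_eq hi hx
  have hWc : HasCompactSupport (W 0) := (hasCompactSupport_pd (h.hasCompactSupport 0) 2).sub
    (hasCompactSupport_pd (h.hasCompactSupport 2) 0)
  have hcross (x : E3) : x 1 * W 0 x = x 0 * W 1 x := by
    have := (hWd 0).continuous
    have := (hWd 1).continuous
    refine congrFun ((Continuous.ae_eq_iff_eq volume (f := fun x : E3 => x 1 * W 0 x)
      (g := fun x : E3 => x 0 * W 1 x) (by fun_prop) (by fun_prop)).1 ?_) x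
    filter_upwards [ae_rad_ne_zero] with y hy
    rw [hWΩ hy 0 (by decide), hWΩ hy 1 (by decide), mul_left_comm]
  have hproj : (EuclideanSpace.proj 0 : E3 →L[ℝ] ℝ) ≠ 0 := fun h0 => by
    simpa using congrArg (fun ℓ : E3 →L[ℝ] ℝ => ℓ (EuclideanSpace.single 0 1)) h0
  obtain ⟨Q, hQ, hQc, hWQ⟩ := exists_contDiff_eq_smul (hW 0) hWc hproj
    fun x hx => eq_zero_of_coord_mul_eq (hWd 0) (hWd 1) hcross hx
  have hQΩ : Q =ᵐ[volume] OmegaFun ur uz := by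
    filter_upwards [ae_rad_ne_zero, ae_coord_ne_zero 0] with x hx hx0
    exact mul_left_cancel₀ hx0 ((hWQ x).symm.trans (hWΩ hx 0 (by decide)))
  refine ⟨Q, hQ, hQc, hQΩ, fun i hi => congrFun ?_⟩
  refine (Continuous.ae_eq_iff_eq volume (hW i).continuous
    (g := fun x => x i * Q x) (by fun_prop)).1 ?_
  filter_upwards [ae_rad_ne_zero, hQΩ] with x hx hQx
  rw [hQx, hWΩ hx i hi]

lemma laplacian_eq (h : SwirlFreeField U ur uz) {Q : E3 → ℝ} (hQ : ContDiff ℝ ∞ Q)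
    (hQc : HasCompactSupport Q)
    (hW : ∀ i, i ≠ 2 → ∀ x, pd 2 (U i) x - pd i (U 2) x = x i * Q x) {i : Fin 3} (hi : i ≠ 2) :
    Δ (toSchwartzC (U i) (h.contDiff i) (h.hasCompactSupport i))
      = ∂_{EuclideanSpace.basisFun (Fin 3) ℝ 2}
          (mulInner (EuclideanSpace.basisFun (Fin 3) ℝ i) (toSchwartzC Q hQ hQc)) := by
  set V : Fin 3 → 𝓢(E3, ℂ) := fun i => toSchwartzC (U i) (h.contDiff i) (h.hasCompactSupport i)
  have hV (k i : Fin 3) (x : E3) :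
      ∂_{EuclideanSpace.basisFun (Fin 3) ℝ k} (V i) x = pd k (U i) x := by
    simp only [V, lineDerivOp_toSchwartzC, toSchwartzC_apply]
  refine (laplacian_eq_lineDerivOp_vorticity (V := V) (fun i j hi hj => ?_) ?_ hi).trans
    (congrArg _ ?_)
  all_goals ext x
  · rw [hV, hV, h.pd_comm hi hj]
  · rw [sum_apply, Finset.sum_congr rfl fun j _ => hV j j x]
    exact (Complex.ofReal_sum _ _).symm.trans (congrArg Complex.ofReal (h.div_eq_zero x))
  · rw [sub_apply, hV, hV, mulInner_apply, toSchwartzC_apply]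
    simpa [EuclideanSpace.inner_single_right] using congrArg Complex.ofReal (hW i hi x)

/-- The matrices `∂_k ∂_j U_i` of second derivatives of the components of `U`. -/
def hessian (h : SwirlFreeField U ur uz) (k i j : Fin 3) : 𝓢(E3, ℂ) :=
  ∂_{EuclideanSpace.basisFun (Fin 3) ℝ k} (∂_{EuclideanSpace.basisFun (Fin 3) ℝ j}
    (toSchwartzC (U i) (h.contDiff i) (h.hasCompactSupport i)))

lemma norm_fderiv_overRad_le (h : SwirlFreeField U ur uz) {x : E3} (hx : rad x ≠ 0) :
    ‖fderiv ℝ (overRad ur) x‖ ≤ ∑ k, ‖contract eTheta (h.hessian k) x‖ := by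
  refine (opNorm_le_sum_norm_apply (EuclideanSpace.basisFun (Fin 3) ℝ) _).trans_eq
    (Finset.sum_congr rfl fun k _ => ?_)
  rw [EuclideanSpace.basisFun_apply, ← pd, h.pd_overRad_eq k hx, ← Complex.norm_real]
  simp only [contract, hessian, lineDerivOp_toSchwartzC, toSchwartzC_apply]
  simp

end SwirlFreeField

theorem exists_swirlFree_eLpNorm_fderiv_le {p : ℝ} (hp : 1 < p) :
    ∃ C : ℝ, 0 < C ∧ ∀ (U : Fin 3 → E3 → ℝ) (ur uz : ℝ → ℝ → ℝ), SwirlFreeField U ur uz →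
      eLpNorm (fun x => fderiv ℝ (overRad ur) x) (ENNReal.ofReal p) volume
        ≤ ENNReal.ofReal C * eLpNorm (OmegaFun ur uz) (ENNReal.ofReal p) volume := by
  obtain ⟨C, hC, hcontract⟩ :=
    exists_eLpNorm_contract_le hp (EuclideanSpace.basisFun (Fin 3) ℝ) 2
  refine ⟨3 * C, by positivity, fun U ur uz h => ?_⟩
  obtain ⟨Q, hQ, hQc, hQΩ, hW⟩ := h.exists_pd_sub_pd_eq
  have hQnorm : eLpNorm (toSchwartzC Q hQ hQc) (ENNReal.ofReal p) volume
      = eLpNorm (OmegaFun ur uz) (ENNReal.ofReal p) volume :=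
    eLpNorm_congr_norm_ae (hQΩ.mono fun x hx => by rw [toSchwartzC_apply, Complex.norm_real, hx])
  have hbound (k : Fin 3) : eLpNorm (fun x => ‖contract eTheta (h.hessian k) x‖)
      (ENNReal.ofReal p) volume
        ≤ ENNReal.ofReal C * eLpNorm (OmegaFun ur uz) (ENNReal.ofReal p) volume := by
    rw [eLpNorm_norm, ← hQnorm]
    exact hcontract eTheta isTangential_eTheta _ _ (fun i hi => h.laplacian_eq hQ hQc hW hi) k
  have hle : ∀ᵐ x, ‖fderiv ℝ (overRad ur) x‖
      ≤ (∑ k, fun y => ‖contract eTheta (h.hessian k) y‖) x := by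
    filter_upwards [ae_rad_ne_zero] with x hx
    simpa using h.norm_fderiv_overRad_le hx
  calc eLpNorm (fun x => fderiv ℝ (overRad ur) x) (ENNReal.ofReal p) volume
    _ ≤ eLpNorm (∑ k, fun x => ‖contract eTheta (h.hessian k) x‖) (ENNReal.ofReal p) volume :=
      eLpNorm_mono_ae_real hle
    _ ≤ ∑ k, eLpNorm (fun x => ‖contract eTheta (h.hessian k) x‖) (ENNReal.ofReal p) volume :=
      eLpNorm_sum_le (fun k _ => (measurable_contract isTangential_eTheta.measurable
        _).aestronglyMeasurable.norm) (by simpa using hp.le)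
    _ ≤ ∑ _ : Fin 3, ENNReal.ofReal C * eLpNorm (OmegaFun ur uz) (ENNReal.ofReal p) volume :=
      Finset.sum_le_sum fun k _ => hbound k
    _ = ENNReal.ofReal (3 * C) * eLpNorm (OmegaFun ur uz) (ENNReal.ofReal p) volume := by
      simp [ENNReal.ofReal_mul, mul_assoc]

end SwirlFree

section Symmetrization

open scoped ContDiff

/-- The eigenvalues of the reflection `x₂ ↦ -x₂`. -/
def reflectSign (i : Fin 3) : ℝ := if i = 1 then -1 else 1

/-- The reflection `x₂ ↦ -x₂`, which reverses `e_θ` and preserves `e_r` and `e_z`. -/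
def reflect : E3 ≃ₗᵢ[ℝ] E3 :=
  LinearIsometryEquiv.piLpCongrRight 2 fun i =>
    if i = 1 then LinearIsometryEquiv.neg ℝ else LinearIsometryEquiv.refl ℝ ℝ

lemma reflect_apply (x : E3) (i : Fin 3) : reflect x i = reflectSign i * x i := by
  rw [reflect, reflectSign, LinearIsometryEquiv.piLpCongrRight_apply]
  split_ifs <;> simp [*]

lemma reflectSign_mul_self (i : Fin 3) : reflectSign i * reflectSign i = 1 := by
  unfold reflectSign
  split_ifs <;> norm_num

lemma rad_reflect (x : E3) : rad (reflect x) = rad x := by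
  simp [rad, reflect_apply, reflectSign]

lemma reflect_single (i : Fin 3) :
    reflect (EuclideanSpace.single i 1) = reflectSign i • EuclideanSpace.single i (1 : ℝ) := by
  ext j
  rcases eq_or_ne j i with rfl | hj <;> simp [reflect_apply, *]

lemma pd_comp_reflect {f : E3 → ℝ} (hf : Differentiable ℝ f) (i : Fin 3) (x : E3) :
    pd i (fun y => f (reflect y)) x = reflectSign i * pd i f (reflect x) := by
  have h := (hf (reflect x)).hasFDerivAt.comp x reflect.toContinuousLinearEquiv.hasFDerivAt
  refine (congrArg (fun M : E3 →L[ℝ] ℝ => M (EuclideanSpace.single i 1)) h.fderiv).trans ?_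
  simp [reflect_single, pd]

/-- The average of a vector field and its mirror image under `reflect`. -/
def symmetrize (u : E3 → E3) (i : Fin 3) (x : E3) : ℝ :=
  (u x i + reflectSign i * u (reflect x) i) / 2

variable {u : E3 → E3}

lemma contDiff_symmetrize (hu : ContDiff ℝ ∞ u) (i : Fin 3) : ContDiff ℝ ∞ (symmetrize u i) := by
  have := reflect.contDiff (n := ∞)
  unfold symmetrize
  fun_prop

lemma hasCompactSupport_symmetrize (hc : HasCompactSupport u) (i : Fin 3) :
    HasCompactSupport (symmetrize u i) := by
  have hmirror := hc.comp_homeomorph reflect.toHomeomorph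
  exact (hc.comp_left (g := fun y : E3 => y i) rfl).comp₂_left (m := fun a b => (a + b) / 2)
    (hmirror.comp_left (g := fun y : E3 => reflectSign i * y i) (by simp)) (by simp)

lemma pd_symmetrize (hu : Differentiable ℝ u) (i : Fin 3) (x : E3) :
    pd i (symmetrize u i) x
      = (pd i (fun y => u y i) x + pd i (fun y => u y i) (reflect x)) / 2 := by
  have hui : Differentiable ℝ fun x => u x i := by fun_prop
  have hmirror : Differentiable ℝ fun x => u (reflect x) i :=
    hui.comp reflect.toContinuousLinearEquiv.differentiable
  have hderiv := ((hui x).hasFDerivAt.fun_add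
    ((hmirror x).hasFDerivAt.const_mul (reflectSign i))).mul_const (2⁻¹ : ℝ)
  have : pd i (symmetrize u i) x
      = 2⁻¹ * (pd i (fun y => u y i) x + reflectSign i * pd i (fun y => u (reflect y) i) x) :=
    congrArg (fun M : E3 →L[ℝ] ℝ => M (EuclideanSpace.single i 1)) hderiv.fderiv
  rw [this, pd_comp_reflect hui, ← mul_assoc, reflectSign_mul_self, one_mul, ← div_eq_inv_mul]

theorem swirlFreeField_symmetrize {ur uθ uz : ℝ → ℝ → ℝ} (hu : ContDiff ℝ ∞ u)
    (hc : HasCompactSupport u) (hur : ContDiff ℝ ∞ fun v : ℝ × ℝ => ur v.1 v.2)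
    (huz : ContDiff ℝ ∞ fun v : ℝ × ℝ => uz v.1 v.2) (ha : AxisymVec u ur uθ uz)
    (hdiv : ∀ x : E3, (∑ i : Fin 3, pd i (fun y => u y i) x) = 0) :
    SwirlFreeField (symmetrize u) ur uz where
  contDiff := contDiff_symmetrize hu
  hasCompactSupport := hasCompactSupport_symmetrize hc
  contDiff_ur := hur
  contDiff_uz := huz
  eq_mul i hi x hx := by
    obtain ⟨h0, h1, -⟩ := ha x hx
    obtain ⟨h0', h1', -⟩ := ha (reflect x) (by rwa [rad_reflect])
    obtain rfl | rfl : i = 0 ∨ i = 1 := by omega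
    all_goals
      simp only [symmetrize, overRad, h0, h1, h0', h1', rad_reflect, reflect_apply, reflectSign,
        Fin.isValue, Fin.reduceEq, if_true, if_false, one_mul]
      ring
  eq_uz x hx := by
    obtain ⟨-, -, h2⟩ := ha x hx
    obtain ⟨-, -, h2'⟩ := ha (reflect x) (by rwa [rad_reflect])
    simp [symmetrize, h2, h2', rad_reflect, reflect_apply, reflectSign]
  div_eq_zero x := by
    simp only [pd_symmetrize (hu.differentiable (by simp)), ← Finset.sum_div,
      Finset.sum_add_distrib, hdiv, add_zero, zero_div]

end Symmetrization

/-- For `1 < p < ∞` there is `C_p > 0` such that for every smooth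
divergence-free axially symmetric vector field `u = u^r e_r + u^θ e_θ + u^z e_z`
on `ℝ³` with sufficient decay, `‖∇(u^r/r)‖_{L^p} ≤ C_p ‖Ω‖_{L^p}`, where
`Ω = w^θ/r` and `u^r/r` is regarded as a function on `ℝ³`. -/
theorem grad_ur_over_r_estimate (p : ℝ) (hp : 1 < p) :
    ∃ C : ℝ, 0 < C ∧
      ∀ (u : E3 → E3) (ur uθ uz : ℝ → ℝ → ℝ),
        ContDiff ℝ (⊤ : ℕ∞) u → HasCompactSupport u →
        ContDiff ℝ (⊤ : ℕ∞) (fun v : ℝ × ℝ => ur v.1 v.2) →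
        ContDiff ℝ (⊤ : ℕ∞) (fun v : ℝ × ℝ => uθ v.1 v.2) →
        ContDiff ℝ (⊤ : ℕ∞) (fun v : ℝ × ℝ => uz v.1 v.2) →
        AxisymVec u ur uθ uz →
        (∀ x : E3, (∑ i : Fin 3, pd i (fun y => u y i) x) = 0) →
        eLpNorm (fun x => fderiv ℝ (fun y : E3 => ur (rad y) (y 2) / rad y) x)
            (ENNReal.ofReal p) volume
          ≤ ENNReal.ofReal C * eLpNorm (OmegaFun ur uz) (ENNReal.ofReal p) volume := by
  obtain ⟨C, hC, hbound⟩ := exists_swirlFree_eLpNorm_fderiv_le hp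
  exact ⟨C, hC, fun u ur uθ uz hu hc hur _ huz ha hdiv =>
    hbound _ ur uz (swirlFreeField_symmetrize hu hc hur huz ha hdiv)⟩
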